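/- arXiv:2309.02988 — 2 statements merged into one kernel-verified Lean document; each statement's English description precedes it below -/
import Mathlib

section
/- Let 0 < α < 1, a < T, and let u : [a,T] → ℝ be continuously differentiable. Then for every t ∈ (a,T), the function G(τ) = ∫_a^τ ω_{1−α}(τ−s) u(s) ds is differentiable at t, and G′(t) = (1/Γ(1−α)) ∫_a^t (t−s)^{−α} u′(s) ds + u(a) · (t−a)^{−α}/Γ(1−α); that is, the Riemann–Liouville derivative of u of order α (based at a) equals the Caputo derivative of u of order α (based at a) plus ω_{1−α}(t−a) u(a). -/
/-- The Riemann–Liouville kernel `ω_β(t) = t^(β-1) / Γ(β)`. -/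
noncomputable def rlKernel (β t : ℝ) : ℝ := t ^ (β - 1) / Real.Gamma β

/-!
The kernel is only integrable, so the derivative must fall on `u`, but the upper limit of
`∫_a^τ k(τ - s) u(s) ds` moves with `τ`. Write `u = u(a) + w`. The constant contributes
`u(a) ∫_0^{τ-a} k`, whose derivative is the initial term. Once `u` is extended by constants outside
`[a, b]`, the function `w` is Lipschitz, almost everywhere differentiable and zero to the left of
`a`, so after the substitution `r = τ - s` its contribution is `∫_0^{b-a} k(r) w(τ - r) dr`, with
limits independent of `τ`, and dominated convergence lets one differentiate under the integral.
-/

open Filter MeasureTheory Set Topology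
open scoped NNReal

theorem lipschitzWith_IccExtend {E : Type*} [PseudoEMetricSpace E] {u : ℝ → E} {a b : ℝ} {C : ℝ≥0}
    (hab : a ≤ b) (hu : LipschitzOnWith C u (Icc a b)) :
    LipschitzWith C (IccExtend hab ((Icc a b).domRestrict u)) := by
  rw [← mul_one C]
  exact hu.to_restrict.comp (LipschitzWith.projIcc hab)

theorem IccExtend_eventuallyEq {α β : Type*} [LinearOrder α] [TopologicalSpace α]
    [OrderClosedTopology α] {f : α → β} {a b x : α} (hab : a ≤ b) (hx : x ∈ Ioo a b) :
    IccExtend hab ((Icc a b).domRestrict f) =ᶠ[𝓝 x] f := by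
  filter_upwards [Icc_mem_nhds hx.1 hx.2] with y hy
  rw [IccExtend_of_mem _ _ hy, domRestrict_apply]

theorem intervalIntegrable_comp_sub {E : Type*} [NormedAddCommGroup E] {f : ℝ → E} {a b t : ℝ}
    (hf : IntervalIntegrable f volume 0 (b - a)) (ht : t ∈ Icc a b) :
    IntervalIntegrable (fun s => f (t - s)) volume a t := by
  have hta : t - a ∈ Icc 0 (b - a) := ⟨sub_nonneg.2 ht.1, sub_le_sub_right ht.2 a⟩
  have hf_int : IntervalIntegrable f volume 0 (t - a) :=
    hf.mono_set (uIcc_subset_uIcc_left (Icc_subset_uIcc hta))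
  simpa using (hf_int.comp_sub_left t).symm

section Convolution

variable {E : Type*} [NormedAddCommGroup E] [NormedSpace ℝ E]
  {k : ℝ → ℝ} {u w : ℝ → E} {a b t : ℝ} {C : ℝ≥0}

theorem deriv_IccExtend (hab : a ≤ b) (ht : t ∈ Ioo a b) :
    deriv (IccExtend hab ((Icc a b).domRestrict u)) t = derivWithin u (Icc a b) t := by
  rw [(IccExtend_eventuallyEq hab ht).deriv_eq, derivWithin_of_mem_nhds (Icc_mem_nhds ht.1 ht.2)]

theorem ae_differentiableAt_IccExtend (hab : a ≤ b)
    (hu : ∀ᵐ x, x ∈ Icc a b → DifferentiableWithinAt ℝ u (Icc a b) x) :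
    ∀ᵐ x, DifferentiableAt ℝ (IccExtend hab ((Icc a b).domRestrict u)) x := by
  filter_upwards [hu, volume.ae_ne a, volume.ae_ne b] with x hx hxa hxb
  rcases hxa.lt_or_gt with hxa | hax
  · refine (differentiableAt_const (u a)).congr_of_eventuallyEq ?_
    filter_upwards [Iio_mem_nhds hxa] with y hy using IccExtend_of_le_left hab _ (le_of_lt hy)
  rcases hxb.lt_or_gt with hxb | hbx
  · exact ((hx ⟨hax.le, hxb.le⟩).differentiableAt (Icc_mem_nhds hax hxb)).congr_of_eventuallyEq
      (IccExtend_eventuallyEq hab ⟨hax, hxb⟩)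
  · refine (differentiableAt_const (u b)).congr_of_eventuallyEq ?_
    filter_upwards [Ioi_mem_nhds hbx] with y hy using IccExtend_of_right_le hab _ (le_of_lt hy)

theorem integral_comp_sub_smul_eq_of_eq_zero_left (hw : ∀ x < a, w x = 0) (ht : t ∈ Icc a b) :
    ∫ s in a..t, k (t - s) • w s = ∫ r in 0..(b - a), k r • w (t - r) := by
  calc ∫ s in a..t, k (t - s) • w s
      = ∫ r in 0..(t - a), k r • w (t - r) := by
        simpa using intervalIntegral.integral_comp_sub_left (a := a) (b := t)
          (fun r => k r • w (t - r)) t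
    _ = ∫ r in 0..(b - a), k r • w (t - r) := by
        rw [intervalIntegral.integral_of_le (sub_nonneg.2 ht.1),
          intervalIntegral.integral_of_le (sub_nonneg.2 (ht.1.trans ht.2))]
        refine (setIntegral_eq_of_subset_of_forall_sdiff_eq_zero measurableSet_Ioc
          (Ioc_subset_Ioc_right (sub_le_sub_right ht.2 a)) fun r hr => ?_).symm
        have hr' : t - a < r := not_le.1 fun h => hr.2 ⟨hr.1.1, h⟩
        rw [hw _ (sub_lt_comm.1 hr'), smul_zero]

variable [CompleteSpace E]

theorem hasDerivAt_integral_comp_sub {f : ℝ → E} (hf : IntervalIntegrable f volume 0 (b - a))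
    (hf_cont : ContinuousAt f (t - a)) (ht : t ∈ Ioo a b) :
    HasDerivAt (fun τ => ∫ s in a..τ, f (τ - s)) (f (t - a)) t := by
  have hta : t - a ∈ Ioo 0 (b - a) := ⟨sub_pos.2 ht.1, sub_lt_sub_right ht.2 a⟩
  have hf_meas : StronglyMeasurableAtFilter f (𝓝 (t - a)) :=
    ⟨Ioc 0 (b - a), Ioc_mem_nhds hta.1 hta.2, hf.1.aestronglyMeasurable⟩
  have hf_int : IntervalIntegrable f volume 0 (t - a) :=
    hf.mono_set (uIcc_subset_uIcc_left (Icc_subset_uIcc (Ioo_subset_Icc_self hta)))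
  simpa using
    (intervalIntegral.integral_hasDerivAt_right hf_int hf_meas hf_cont).comp_sub_const t a

theorem hasDerivAt_integral_smul_comp_sub_of_lipschitzWith (hw : LipschitzWith C w)
    (hw_diff : ∀ᵐ x, DifferentiableAt ℝ w x) (hk : IntervalIntegrable k volume a b) (t : ℝ) :
    HasDerivAt (fun τ => ∫ r in a..b, k r • w (τ - r)) (∫ r in a..b, k r • deriv w (t - r)) t := by
  have hk_meas := hk.def'.aestronglyMeasurable
  have hw_cont (τ : ℝ) : Continuous fun r => w (τ - r) := hw.continuous.comp (by fun_prop)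
  have hw_lip (r : ℝ) : LipschitzWith (Real.nnabs (‖k r‖ * C)) fun τ => k r • w (τ - r) := by
    have hconst : Real.nnabs (‖k r‖ * C) = ‖k r‖₊ * C := by ext; simp
    rw [hconst, ← mul_one C]
    exact (lipschitzWith_smul (k r)).comp (hw.comp (IsometryEquiv.subRight r).isometry.lipschitz)
  have hw_diff_sub : ∀ᵐ r, DifferentiableAt ℝ w (t - r) :=
    (quasiMeasurePreserving_sub_left volume t).ae hw_diff
  refine (intervalIntegral.hasDerivAt_integral_of_dominated_loc_of_lip univ_mem
    (.of_forall fun τ => hk_meas.smul (hw_cont τ).aestronglyMeasurable)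
    (hk.smul_continuousOn (hw_cont t).continuousOn)
    (hk_meas.smul ?_) (.of_forall fun r _ => (hw_lip r).lipschitzOnWith)
    (hk.norm.mul_const C) ?_).2
  · exact ((stronglyMeasurable_deriv w).comp_measurable (by fun_prop)).aestronglyMeasurable
  · filter_upwards [hw_diff_sub] with r hr _
    exact (hr.hasDerivAt.comp_sub_const t r).const_smul (k r)

theorem hasDerivAt_convolution_of_eq_zero_left (hw : LipschitzWith C w)
    (hw_diff : ∀ᵐ x, DifferentiableAt ℝ w x) (hw_left : ∀ x < a, w x = 0)
    (hk : IntervalIntegrable k volume 0 (b - a)) (ht : t ∈ Ioo a b) :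
    HasDerivAt (fun τ => ∫ s in a..τ, k (τ - s) • w s) (∫ s in a..t, k (t - s) • deriv w s) t := by
  have hderiv_left : ∀ x < a, deriv w x = 0 := fun x hx => by
    have hw_zero : w =ᶠ[𝓝 x] fun _ => 0 := by
      filter_upwards [Iio_mem_nhds hx] using hw_left
    rw [hw_zero.deriv_eq, deriv_const]
  rw [integral_comp_sub_smul_eq_of_eq_zero_left hderiv_left (Ioo_subset_Icc_self ht)]
  have h_deriv := hasDerivAt_integral_smul_comp_sub_of_lipschitzWith hw hw_diff hk t
  refine h_deriv.congr_of_eventuallyEq ?_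
  filter_upwards [Icc_mem_nhds ht.1 ht.2] with τ hτ
  exact integral_comp_sub_smul_eq_of_eq_zero_left hw_left hτ

theorem hasDerivAt_convolution_of_eq_const_left (hu : LipschitzWith C u)
    (hu_diff : ∀ᵐ x, DifferentiableAt ℝ u x) (hu_left : ∀ x < a, u x = u a)
    (hk : IntervalIntegrable k volume 0 (b - a)) (hk_cont : ContinuousAt k (t - a))
    (ht : t ∈ Ioo a b) :
    HasDerivAt (fun τ => ∫ s in a..τ, k (τ - s) • u s)
      ((∫ s in a..t, k (t - s) • deriv u s) + k (t - a) • u a) t := by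
  have hw : LipschitzWith C fun x => u x - u a := by
    simpa using hu.sub (LipschitzWith.const (u a))
  have hw_diff : ∀ᵐ x, DifferentiableAt ℝ (fun x => u x - u a) x := by
    filter_upwards [hu_diff] with x hx using hx.sub_const (u a)
  have h_split : ∀ τ ∈ Icc a b, ∫ s in a..τ, k (τ - s) • u s =
      (∫ s in a..τ, k (τ - s) • (u s - u a)) + (∫ s in a..τ, k (τ - s)) • u a := by
    intro τ hτ
    have hk_int := intervalIntegrable_comp_sub hk hτ
    rw [← intervalIntegral.integral_smul_const, ← intervalIntegral.integral_add
      (hk_int.smul_continuousOn hw.continuous.continuousOn)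
      (hk_int.smul_continuousOn continuousOn_const)]
    simp only [← smul_add, sub_add_cancel]
  have h_deriv := (hasDerivAt_convolution_of_eq_zero_left hw hw_diff
    (fun x hx => sub_eq_zero.2 (hu_left x hx)) hk ht).add
    ((hasDerivAt_integral_comp_sub hk hk_cont ht).smul_const (u a))
  simp only [deriv_sub_const] at h_deriv
  refine h_deriv.congr_of_eventuallyEq ?_
  filter_upwards [Icc_mem_nhds ht.1 ht.2] using h_split

theorem hasDerivAt_convolution_of_lipschitzOnWith (hu : LipschitzOnWith C u (Icc a b))
    (hu_diff : ∀ᵐ x, x ∈ Icc a b → DifferentiableWithinAt ℝ u (Icc a b) x)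
    (hk : IntervalIntegrable k volume 0 (b - a)) (hk_cont : ContinuousAt k (t - a))
    (ht : t ∈ Ioo a b) :
    HasDerivAt (fun τ => ∫ s in a..τ, k (τ - s) • u s)
      ((∫ s in a..t, k (t - s) • derivWithin u (Icc a b) s) + k (t - a) • u a) t := by
  have hab : a ≤ b := (ht.1.trans ht.2).le
  set v : ℝ → E := IccExtend hab ((Icc a b).domRestrict u)
  have hv_eq : ∀ x ∈ Icc a b, v x = u x := fun x hx => IccExtend_of_mem hab _ hx
  have hva : v a = u a := hv_eq a (left_mem_Icc.2 hab)
  have hv_left : ∀ x < a, v x = v a := fun x hx =>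
    (IccExtend_of_le_left hab _ hx.le).trans hva.symm
  have hv_deriv : ∫ s in a..t, k (t - s) • deriv v s =
      ∫ s in a..t, k (t - s) • derivWithin u (Icc a b) s :=
    intervalIntegral.integral_congr_Ioo_of_le ht.1.le fun s hs => by
      simp only [v, deriv_IccExtend hab ⟨hs.1, hs.2.trans ht.2⟩]
  rw [← hv_deriv, ← hva]
  refine (hasDerivAt_convolution_of_eq_const_left (lipschitzWith_IccExtend hab hu)
    (ae_differentiableAt_IccExtend hab hu_diff) hv_left hk hk_cont ht).congr_of_eventuallyEq ?_
  filter_upwards [Icc_mem_nhds ht.1 ht.2] with τ hτ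
  refine intervalIntegral.integral_congr_Ioo_of_le hτ.1 fun s hs => ?_
  rw [← hv_eq s ⟨hs.1.le, hs.2.le.trans hτ.2⟩]

theorem rl_eq_caputo_plus_initial_general {α : ℝ} (hα : α < 1)
    (hu : LipschitzOnWith C u (Icc a b))
    (hu_diff : ∀ᵐ x, x ∈ Icc a b → DifferentiableWithinAt ℝ u (Icc a b) x) (ht : t ∈ Ioo a b) :
    HasDerivAt (fun τ => ∫ s in a..τ, rlKernel (1 - α) (τ - s) • u s)
      ((1 / Real.Gamma (1 - α)) • (∫ s in a..t, (t - s) ^ (-α) • derivWithin u (Icc a b) s)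
        + ((t - a) ^ (-α) / Real.Gamma (1 - α)) • u a) t := by
  have hrl : rlKernel (1 - α) = fun r => r ^ (-α) / Real.Gamma (1 - α) := by
    funext r
    rw [rlKernel, sub_sub_cancel_left]
  have hk : IntervalIntegrable (rlKernel (1 - α)) volume 0 (b - a) := by
    rw [hrl]
    exact (intervalIntegral.intervalIntegrable_rpow' (by linarith)).div_const _
  have hk_cont : ContinuousAt (rlKernel (1 - α)) (t - a) := by
    rw [hrl]
    exact (Real.continuousAt_rpow_const _ _ (.inl (sub_pos.2 ht.1).ne')).div_const _
  have h_deriv := hasDerivAt_convolution_of_lipschitzOnWith hu hu_diff hk hk_cont ht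
  have h_caputo : ∫ s in a..t, rlKernel (1 - α) (t - s) • derivWithin u (Icc a b) s =
      (1 / Real.Gamma (1 - α)) • ∫ s in a..t, (t - s) ^ (-α) • derivWithin u (Icc a b) s := by
    simp only [hrl, ← intervalIntegral.integral_smul, smul_smul, one_div_mul_eq_div]
  rw [h_caputo] at h_deriv
  simpa only [hrl] using h_deriv

end Convolution

/-- Relation between Riemann–Liouville and Caputo derivatives based at `a`: for
`u` continuously differentiable on `[a,T]` and `t ∈ (a,T)`, the map
`τ ↦ ∫_a^τ ω_{1-α}(τ-s) u(s) ds` is differentiable at `t` with derivative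
`(1/Γ(1-α)) ∫_a^t (t-s)^{-α} u'(s) ds + u(a)(t-a)^{-α}/Γ(1-α)`. -/
theorem rl_eq_caputo_plus_initial (α a T : ℝ) (hα0 : 0 < α) (hα1 : α < 1) (haT : a < T)
    (u : ℝ → ℝ) (hu : ContDiffOn ℝ 1 u (Set.Icc a T)) :
    ∀ t ∈ Set.Ioo a T,
      HasDerivAt (fun τ => ∫ s in a..τ, rlKernel (1 - α) (τ - s) * u s)
        ((1 / Real.Gamma (1 - α)) *
            (∫ s in a..t, (t - s) ^ (-α) * derivWithin u (Set.Icc a T) s)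
          + u a * (t - a) ^ (-α) / Real.Gamma (1 - α)) t := by
  intro t ht
  obtain ⟨C, hC⟩ := hu.exists_lipschitzOnWith one_ne_zero (convex_Icc a T) isCompact_Icc
  simpa only [smul_eq_mul, mul_comm (u a), mul_div_right_comm] using
    rl_eq_caputo_plus_initial_general hα1 hC
      (.of_forall fun x hx => hu.differentiableOn one_ne_zero x hx) ht
end

section
/- Let 0 < α < 1/2. There exists C > 0 depending only on α with the following property: for every T > 0 and every continuous e : [0,T] → ℝ, the function w(t) = ∫_t^T ω_α(s−t) e(s) ds satisfies: the map t ↦ ∫_0^t ω_{1−α}(t−s) w(s) ds is differentiable at almost every t ∈ (0,T), and its derivative D_{0+}^α w satisfies ∫_0^T ((D_{0+}^α w)(t))² dt ≤ C ∫_0^T e(t)² dt. -/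
/-!
Write `w = I_{T-}^α e`. The kernel of the composition `I_{0+}^{1-α} I_{T-}^α` is homogeneous of
degree zero and does not depend on `T`. A Möbius substitution turns it into `1 / (Γ(1-α) Γ(α))`
times `log u - log |τ - u| + ∫_0^τ k(σ, u) dσ + j · 1_{u ≤ τ}`, where
`k(σ, u) = ((u / σ) ^ α - 1) / (u - σ)` and `j` is a constant. Differentiating in `τ`, the
derivative `D_{0+}^α w` is, up to that factor, the sum of three operators applied to `e`:

* `-π` times the Hilbert transform, bounded on `L²` by Plancherel. That `π` times the Hilbert
  transform is the derivative of the logarithmic potential follows by letting `ε → 0` in the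
  conjugate Poisson kernels `x / (x² + ε²)`, which are Fourier multipliers on one side and
  derivatives of `log (x² + ε²) / 2` on the other.
* the integral operator with kernel `k`. It is homogeneous of degree `-1`, so Minkowski's inequality
  for dilates bounds it on `L²(0, ∞)` by `∫_0^∞ |k(1, y)| y ^ (-1/2) dy`, finite as `α < 1/2`.
* multiplication by `j`.

The three operators are identified through primitives in `τ`, and Lebesgue's differentiation theorem
gives the derivative almost everywhere.
-/

open MeasureTheory Filter Topology Set
open scoped ENNReal FourierTransform

/-! ### Fourier multipliers on `L²` -/

section FourierL2

variable {V F : Type*} [NormedAddCommGroup V] [InnerProductSpace ℝ V] [FiniteDimensional ℝ V]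
  [MeasurableSpace V] [BorelSpace V] [NormedAddCommGroup F]

theorem fourier_toLp_ae_eq [InnerProductSpace ℂ F] [CompleteSpace F] {f : V → F}
    (hf : Integrable f) (hf2 : MemLp f 2) :
    (𝓕 (hf2.toLp f) : Lp F 2 (volume : Measure V)) =ᵐ[volume] 𝓕 f := by
  have fourier_loc : LocallyIntegrable (𝓕 f) :=
    (VectorFourier.fourierIntegral_continuous Real.continuous_fourierChar
      (L := innerₗ V) continuous_inner hf).locallyIntegrable
  refine ae_eq_of_integral_contDiff_smul_eq
    ((Lp.memLp _).locallyIntegrable one_le_two) fourier_loc fun φ hφ hφc => ?_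
  let φc : SchwartzMap V ℂ := (hφc.comp_left Complex.ofReal_zero).toSchwartzMap
    (Complex.ofRealCLM.contDiff.comp hφ)
  have real_smul (h : V → F) : ∫ x, φ x • h x = ∫ x, φc x • h x := rfl
  calc ∫ x, φ x • (𝓕 (hf2.toLp f) : Lp F 2 (volume : Measure V)) x
      = ∫ x, φc x • (𝓕 (hf2.toLp f) : Lp F 2 (volume : Measure V)) x := real_smul _
    _ = ∫ x, (𝓕 φc) x • hf2.toLp f x := by
        rw [← Lp.toTemperedDistribution_apply, ← Lp.fourier_toTemperedDistribution_eq,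
          TemperedDistribution.fourier_apply, Lp.toTemperedDistribution_apply]
    _ = ∫ x, (𝓕 φc) x • f x := integral_congr_ae <| by
        filter_upwards [hf2.coeFn_toLp] with x hx using by rw [hx]
    _ = ∫ x, φc x • 𝓕 f x := by
        simpa using! VectorFourier.integral_fourierIntegral_smul_eq_flip (L := innerₗ V)
          Real.continuous_fourierChar continuous_inner φc.integrable hf
    _ = ∫ x, φ x • 𝓕 f x := (real_smul _).symm

/-- The Fourier multiplier operator `f ↦ 𝓕⁻ (m · 𝓕 f)` on `L²` with bounded symbol `m`. -/
noncomputable def fourierMultiplier (m : Lp ℂ ∞ (volume : Measure V))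
    (f : Lp ℂ 2 (volume : Measure V)) : Lp ℂ 2 (volume : Measure V) :=
  𝓕⁻ (m • 𝓕 f : Lp ℂ 2 (volume : Measure V))

theorem norm_fourierMultiplier_le (m : Lp ℂ ∞ (volume : Measure V))
    (f : Lp ℂ 2 (volume : Measure V)) : ‖fourierMultiplier m f‖ ≤ ‖m‖ * ‖f‖ := by
  rw [fourierMultiplier, ← Lp.norm_fourier_eq, FourierTransform.fourier_fourierInv_eq,
    ← Lp.norm_fourier_eq f]
  exact Lp.norm_smul_le m (𝓕 f)

theorem fourierInv_smul_fourier [NormedSpace ℂ F] [CompleteSpace F] {g : V → ℂ} {f : V → F}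
    (hg : Integrable g) (hf : Integrable f) (t : V) :
    𝓕⁻ (fun ξ => g ξ • 𝓕 f ξ) t = ∫ u, 𝓕⁻ g (t - u) • f u := by
  have modulated : Integrable fun ξ => Real.fourierChar (inner ℝ ξ t) • g ξ := by
    simpa using! (VectorFourier.fourierIntegral_convergent_iff (L := -innerₗ V)
      Real.continuous_fourierChar continuous_inner.neg t).2 hg
  calc 𝓕⁻ (fun ξ => g ξ • 𝓕 f ξ) t
      = ∫ ξ, (Real.fourierChar (inner ℝ ξ t) • g ξ) • 𝓕 f ξ := by
        rw [Real.fourierInv_eq]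
        exact integral_congr_ae (.of_forall fun ξ => (smul_assoc _ _ _).symm)
    _ = ∫ u, 𝓕 (fun ξ => Real.fourierChar (inner ℝ ξ t) • g ξ) u • f u := by
        simpa using! (VectorFourier.integral_fourierIntegral_smul_eq_flip (L := innerₗ V)
          Real.continuous_fourierChar continuous_inner modulated hf).symm
    _ = ∫ u, 𝓕⁻ g (t - u) • f u := by
        congr with u
        rw [Real.fourier_eq, Real.fourierInv_eq]
        congr with ξ
        rw [smul_smul, ← AddChar.map_add_eq_mul, inner_sub_right, neg_add_eq_sub]

theorem setIntegral_fourierMultiplier (m : Lp ℂ ∞ (volume : Measure V))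
    (f : Lp ℂ 2 (volume : Measure V)) {s : Set V} (hs : MeasurableSet s)
    (hμs : volume s ≠ ∞) :
    ∫ t in s, fourierMultiplier m f t =
      ∫ ξ, inner ℂ (𝓕 (s.indicator fun _ => (1 : ℂ)) ξ)
        (m ξ • (𝓕 f : Lp ℂ 2 (volume : Measure V)) ξ) := by
  have ind_int : Integrable (s.indicator fun _ : V => (1 : ℂ)) :=
    (integrable_indicator_iff hs).2 (integrableOn_const hμs)
  rw [← L2.inner_indicatorConstLp_one hs hμs, fourierMultiplier, ← Lp.inner_fourier_eq,
    FourierTransform.fourier_fourierInv_eq, L2.inner_def]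
  refine integral_congr_ae ?_
  filter_upwards [fourier_toLp_ae_eq ind_int (memLp_indicator_const 2 hs 1 (.inr hμs)),
    Lp.coeFn_lpSMul (r := 2) m (𝓕 f : Lp ℂ 2 (volume : Measure V))] with ξ h1 h2
  rw [h2, ← h1]
  rfl

theorem setIntegral_integral_fourierInv_smul {g f : V → ℂ} (hg : Integrable g)
    (hf : Integrable f) {s : Set V} (hs : MeasurableSet s) (hμs : volume s ≠ ∞) :
    ∫ t in s, ∫ u, 𝓕⁻ g (t - u) • f u =
      ∫ ξ, inner ℂ (𝓕 (s.indicator fun _ => (1 : ℂ)) ξ) (g ξ • 𝓕 f ξ) := by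
  have ind_int : Integrable (s.indicator fun _ : V => (1 : ℂ)) :=
    (integrable_indicator_iff hs).2 (integrableOn_const hμs)
  have prod_int : Integrable fun ξ => g ξ • 𝓕 f ξ :=
    hg.mul_bdd (c := ∫ x, ‖f x‖)
      (VectorFourier.fourierIntegral_continuous Real.continuous_fourierChar (L := innerₗ V)
        continuous_inner hf).aestronglyMeasurable
      (.of_forall (VectorFourier.norm_fourierIntegral_le_integral_norm _ _ (innerₗ V) f))
  calc ∫ t in s, ∫ u, 𝓕⁻ g (t - u) • f u
      = ∫ t, inner ℂ (s.indicator (fun _ => (1 : ℂ)) t) (𝓕⁻ (fun ξ => g ξ • 𝓕 f ξ) t) := by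
        simp_rw [← integral_indicator hs, fourierInv_smul_fourier hg hf]
        congr with t
        by_cases ht : t ∈ s <;> simp [ht]
    _ = _ := by
        simpa using! (VectorFourier.integral_sesq_fourierIntegral_eq_neg_flip (L := innerₗ V)
          (innerSL ℂ) Real.continuous_fourierChar continuous_inner ind_int prod_int).symm

theorem tendsto_setIntegral_integral_fourierInv_smul {m : Lp ℂ ∞ (volume : Measure V)}
    {g : ℕ → V → ℂ} {C : ℝ} (hg : ∀ n, Integrable (g n)) (hgC : ∀ n, ∀ᵐ ξ, ‖g n ξ‖ ≤ C)
    (hgm : ∀ᵐ ξ, Tendsto (fun n => g n ξ) atTop (𝓝 (m ξ)))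
    {f : V → ℂ} (hf : Integrable f) (hf2 : MemLp f 2)
    {s : Set V} (hs : MeasurableSet s) (hμs : volume s ≠ ∞) :
    Tendsto (fun n => ∫ t in s, ∫ u, 𝓕⁻ (g n) (t - u) • f u) atTop
      (𝓝 (∫ t in s, fourierMultiplier m (hf2.toLp f) t)) := by
  have ind_int : Integrable (s.indicator fun _ : V => (1 : ℂ)) :=
    (integrable_indicator_iff hs).2 (integrableOn_const hμs)
  have fourier_memLp {h : V → ℂ} (h1 : Integrable h) (h2 : MemLp h 2) : MemLp (𝓕 h) 2 :=
    (memLp_congr_ae (fourier_toLp_ae_eq h1 h2)).1 (Lp.memLp _)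
  simp_rw [setIntegral_integral_fourierInv_smul (hg _) hf hs hμs,
    setIntegral_fourierMultiplier m _ hs hμs]
  have ind_fourier := fourier_memLp ind_int (memLp_indicator_const 2 hs 1 (.inr hμs))
  have f_fourier := fourier_memLp hf hf2
  refine tendsto_integral_of_dominated_convergence
    (fun ξ => C * (‖𝓕 (s.indicator fun _ : V => (1 : ℂ)) ξ‖ * ‖𝓕 f ξ‖))
    (fun n => ind_fourier.1.inner ((hg n).1.smul f_fourier.1))
    ((ind_fourier.norm.integrable_mul f_fourier.norm).const_mul C) (fun n => ?_) ?_
  · filter_upwards [hgC n] with ξ hξ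
    calc ‖inner ℂ (𝓕 (s.indicator fun _ : V => (1 : ℂ)) ξ) (g n ξ • 𝓕 f ξ)‖
        ≤ ‖𝓕 (s.indicator fun _ : V => (1 : ℂ)) ξ‖ * ‖g n ξ • 𝓕 f ξ‖ := norm_inner_le_norm _ _
      _ = ‖g n ξ‖ * (‖𝓕 (s.indicator fun _ : V => (1 : ℂ)) ξ‖ * ‖𝓕 f ξ‖) := by
          rw [norm_smul]; ring
      _ ≤ _ := by gcongr
  · filter_upwards [hgm, fourier_toLp_ae_eq hf hf2] with ξ hξ hfξ
    rw [hfξ]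
    exact tendsto_const_nhds.inner (hξ.smul_const _)

end FourierL2

/-! ### The Hilbert transform and the logarithmic potential -/

/-- The symbol `-i sgn ξ` of the Hilbert transform, damped by the factor `exp (-2πε|ξ|)`;
`ε = 0` is the Hilbert transform itself. -/
noncomputable def hilbertSymbol (ε ξ : ℝ) : ℂ :=
  -Complex.I * Real.sign ξ * Real.exp (-(2 * Real.pi * ε * |ξ|))

@[fun_prop]
theorem measurable_hilbertSymbol (ε : ℝ) : Measurable (hilbertSymbol ε) := by
  have measurable_sign : Measurable Real.sign :=
    Measurable.ite measurableSet_Iio measurable_const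
      (Measurable.ite measurableSet_Ioi measurable_const measurable_const)
  unfold hilbertSymbol
  fun_prop

theorem norm_hilbertSymbol_le_one {ε : ℝ} (hε : 0 ≤ ε) (ξ : ℝ) : ‖hilbertSymbol ε ξ‖ ≤ 1 := by
  have sign_le : |Real.sign ξ| ≤ 1 := by
    rcases Real.sign_apply_eq ξ with h | h | h <;> simp [h]
  rw [hilbertSymbol, norm_mul, norm_mul, norm_neg, Complex.norm_I, one_mul, Complex.norm_real,
    Complex.norm_real, Real.norm_eq_abs, Real.norm_of_nonneg (Real.exp_pos _).le]
  exact mul_le_one₀ sign_le (Real.exp_pos _).le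
    (Real.exp_le_one_iff.2 (neg_nonpos.2 (by positivity)))

theorem hilbertSymbol_of_pos (ε : ℝ) {ξ : ℝ} (hξ : 0 < ξ) :
    hilbertSymbol ε ξ = -Complex.I * Complex.exp (-(2 * Real.pi * ε) * ξ) := by
  rw [hilbertSymbol, Real.sign_of_pos hξ, abs_of_pos hξ]
  push_cast
  ring_nf

theorem hilbertSymbol_of_neg (ε : ℝ) {ξ : ℝ} (hξ : ξ < 0) :
    hilbertSymbol ε ξ = Complex.I * Complex.exp (2 * Real.pi * ε * ξ) := by
  rw [hilbertSymbol, Real.sign_of_neg hξ, abs_of_neg hξ]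
  push_cast
  ring_nf

theorem integrable_hilbertSymbol {ε : ℝ} (hε : 0 < ε) : Integrable (hilbertSymbol ε) := by
  have decay_pos : 0 < 2 * Real.pi * ε := by positivity
  have positive_half : IntegrableOn (hilbertSymbol ε) (Ioi 0) :=
    IntegrableOn.congr_fun ((integrableOn_exp_mul_complex_Ioi (by simpa using decay_pos)
      0).const_mul _) (fun ξ hξ => (hilbertSymbol_of_pos ε hξ).symm) measurableSet_Ioi
  have negative_half : IntegrableOn (hilbertSymbol ε) (Iio 0) :=
    IntegrableOn.congr_fun (((integrableOn_exp_mul_complex_Iic (by simpa using decay_pos)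
      0).mono_set Iio_subset_Iic_self).const_mul _)
      (fun ξ hξ => (hilbertSymbol_of_neg ε hξ).symm) measurableSet_Iio
  rw [← integrableOn_univ, ← Iic_union_Ioi (a := (0 : ℝ))]
  exact ((integrableOn_Iic_iff_integrableOn_Iio).2 negative_half).union positive_half

theorem integral_Ioi_exp_smul_hilbertSymbol {ε : ℝ} (hε : 0 < ε) (x : ℝ) :
    ∫ ξ in Ioi (0 : ℝ), Complex.exp (↑(2 * Real.pi * (ξ * x)) * Complex.I) • hilbertSymbol ε ξ =
      Complex.I / (2 * Real.pi * (x * Complex.I - ε)) := by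
  have decay_pos : 0 < 2 * Real.pi * ε := by positivity
  calc _ = ∫ ξ in Ioi (0 : ℝ),
          -Complex.I * Complex.exp (2 * Real.pi * (x * Complex.I - ε) * ξ) := by
        refine setIntegral_congr_fun measurableSet_Ioi fun ξ hξ => ?_
        simp only [hilbertSymbol_of_pos ε hξ, smul_eq_mul, mul_left_comm _ (-Complex.I),
          ← Complex.exp_add]
        push_cast
        ring_nf
    _ = _ := by
        rw [integral_const_mul, integral_exp_mul_complex_Ioi (by simpa using decay_pos)]
        simp [div_eq_mul_inv]

theorem integral_Iic_exp_smul_hilbertSymbol {ε : ℝ} (hε : 0 < ε) (x : ℝ) :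
    ∫ ξ in Iic (0 : ℝ), Complex.exp (↑(2 * Real.pi * (ξ * x)) * Complex.I) • hilbertSymbol ε ξ =
      Complex.I / (2 * Real.pi * (x * Complex.I + ε)) := by
  have decay_pos : 0 < 2 * Real.pi * ε := by positivity
  calc _ = ∫ ξ in Iio (0 : ℝ),
          Complex.I * Complex.exp (2 * Real.pi * (x * Complex.I + ε) * ξ) := by
        rw [integral_Iic_eq_integral_Iio]
        refine setIntegral_congr_fun measurableSet_Iio fun ξ hξ => ?_
        simp only [hilbertSymbol_of_neg ε hξ, smul_eq_mul, mul_left_comm _ Complex.I,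
          ← Complex.exp_add]
        push_cast
        ring_nf
    _ = _ := by
        rw [← integral_Iic_eq_integral_Iio, integral_const_mul,
          integral_exp_mul_complex_Iic (by simpa using decay_pos)]
        simp [div_eq_mul_inv]

theorem fourierInv_hilbertSymbol {ε : ℝ} (hε : 0 < ε) (x : ℝ) :
    𝓕⁻ (hilbertSymbol ε) x = ((x / (x ^ 2 + ε ^ 2) / Real.pi : ℝ) : ℂ) := by
  have integrable_wave : Integrable fun ξ : ℝ =>
      Complex.exp (↑(2 * Real.pi * (ξ * x)) * Complex.I) • hilbertSymbol ε ξ :=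
    (integrable_hilbertSymbol hε).bdd_mul (c := 1) (by fun_prop)
      (.of_forall fun ξ => (Complex.norm_exp_ofReal_mul_I _).le)
  have partial_fractions : Complex.I / (2 * Real.pi * (x * Complex.I + ε)) +
      Complex.I / (2 * Real.pi * (x * Complex.I - ε)) =
        ((x / (x ^ 2 + ε ^ 2) / Real.pi : ℝ) : ℂ) := by
    have plus_ne : Complex.I * x + (ε : ℂ) ≠ 0 :=
      fun h => hε.ne' (by simpa using congrArg Complex.re h)
    have minus_ne : Complex.I * x - (ε : ℂ) ≠ 0 :=
      fun h => hε.ne' (by simpa using congrArg Complex.re h)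
    have sq_ne : (x : ℂ) ^ 2 + (ε : ℂ) ^ 2 ≠ 0 := by
      exact_mod_cast (by positivity : x ^ 2 + ε ^ 2 ≠ 0)
    have pi_ne : (Real.pi : ℂ) ≠ 0 := by exact_mod_cast Real.pi_ne_zero
    push_cast
    field_simp
    linear_combination (2 * x * ε ^ 2 : ℂ) * Complex.I_sq
  simp only [Real.fourierInv_eq', RCLike.inner_apply, conj_trivial]
  simp only [mul_comm x]
  rw [← intervalIntegral.integral_Iic_add_Ioi integrable_wave.integrableOn
    integrable_wave.integrableOn, integral_Iic_exp_smul_hilbertSymbol hε,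
    integral_Ioi_exp_smul_hilbertSymbol hε, partial_fractions]

theorem memLp_hilbertSymbol {ε : ℝ} (hε : 0 ≤ ε) : MemLp (hilbertSymbol ε) ∞ :=
  memLp_top_of_bound (measurable_hilbertSymbol ε).aestronglyMeasurable 1
    (.of_forall (norm_hilbertSymbol_le_one hε))

/-- The Hilbert transform on `L²(ℝ)`, as the Fourier multiplier with symbol `-i sgn ξ`. -/
noncomputable def hilbertTransform (f : Lp ℂ 2 (volume : Measure ℝ)) :
    Lp ℂ 2 (volume : Measure ℝ) :=
  fourierMultiplier ((memLp_hilbertSymbol le_rfl).toLp (hilbertSymbol 0)) f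

theorem norm_hilbertTransform_le (f : Lp ℂ 2 (volume : Measure ℝ)) :
    ‖hilbertTransform f‖ ≤ ‖f‖ := by
  refine (norm_fourierMultiplier_le _ f).trans (mul_le_of_le_one_left (norm_nonneg f) ?_)
  rw [Lp.norm_toLp]
  refine ENNReal.toReal_le_of_le_ofReal zero_le_one ?_
  simpa using eLpNorm_le_of_ae_bound (p := ∞) (μ := (volume : Measure ℝ))
    (.of_forall (norm_hilbertSymbol_le_one le_rfl))

theorem eLpNorm_re_hilbertTransform_le (F : Lp ℂ 2 (volume : Measure ℝ)) :
    eLpNorm (fun t => (hilbertTransform F t).re) 2 ≤ eLpNorm F 2 := by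
  have norm_le := norm_hilbertTransform_le F
  rw [Lp.norm_def, Lp.norm_def,
    ENNReal.toReal_le_toReal (Lp.eLpNorm_ne_top _) (Lp.eLpNorm_ne_top _)] at norm_le
  exact (eLpNorm_mono fun t => Complex.abs_re_le_norm _).trans norm_le

theorem eLpNorm_toLp_ofReal {f : ℝ → ℝ} (hf2 : MemLp f 2) :
    eLpNorm (hf2.ofReal.toLp fun u => (f u : ℂ)) 2 = eLpNorm f 2 := by
  rw [eLpNorm_congr_ae hf2.ofReal.coeFn_toLp]
  exact eLpNorm_congr_norm_ae (.of_forall fun u => Complex.norm_real _)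

theorem tendsto_integral_conjugatePoisson {f : ℝ → ℝ} (hf : Integrable f) (hf2 : MemLp f 2)
    {ε : ℕ → ℝ} (ε_pos : ∀ n, 0 < ε n) (hε : Tendsto ε atTop (𝓝 0)) (a b : ℝ) :
    Tendsto (fun n => ∫ t in Ioc a b, ∫ u, (t - u) / ((t - u) ^ 2 + ε n ^ 2) * f u) atTop
      (𝓝 (Real.pi * ∫ t in Ioc a b,
        (hilbertTransform (hf2.ofReal.toLp fun u => (f u : ℂ)) t).re)) := by
  have damped_tendsto (ξ : ℝ) : Tendsto (fun n => hilbertSymbol (ε n) ξ) atTop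
      (𝓝 (hilbertSymbol 0 ξ)) := by
    have : Continuous fun δ => hilbertSymbol δ ξ := by unfold hilbertSymbol; fun_prop
    exact (this.tendsto 0).comp hε
  have complex_limit := tendsto_setIntegral_integral_fourierInv_smul
    (m := (memLp_hilbertSymbol le_rfl).toLp (hilbertSymbol 0)) (g := fun n => hilbertSymbol (ε n))
    (C := 1) (fun n => integrable_hilbertSymbol (ε_pos n))
    (fun n => .of_forall (norm_hilbertSymbol_le_one (ε_pos n).le))
    (by filter_upwards [(memLp_hilbertSymbol le_rfl).coeFn_toLp] with ξ hξ
        rw [hξ]; exact damped_tendsto ξ)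
    hf.ofReal hf2.ofReal (measurableSet_Ioc (a := a) (b := b)) measure_Ioc_lt_top.ne
  have hilbert_int :=
    integrableOn_Lp_of_measure_ne_top (hilbertTransform (hf2.ofReal.toLp fun u => (f u : ℂ)))
      one_le_two (measure_Ioc_lt_top (a := a) (b := b)).ne
  have real_kernel (n : ℕ) :
      Real.pi * (∫ t in Ioc a b, ∫ u, 𝓕⁻ (hilbertSymbol (ε n)) (t - u) • (f u : ℂ)).re =
        ∫ t in Ioc a b, ∫ u, (t - u) / ((t - u) ^ 2 + ε n ^ 2) * f u := by
    simp_rw [fourierInv_hilbertSymbol (ε_pos n), smul_eq_mul,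
      ← Complex.ofReal_mul, integral_complex_ofReal, Complex.ofReal_re, ← integral_const_mul]
    congr! 4
    field_simp
  have re_integral := integral_re hilbert_int
  simp only [RCLike.re_to_complex] at re_integral
  rw [re_integral]
  exact (((Complex.continuous_re.tendsto _).comp complex_limit).const_mul Real.pi).congr
    real_kernel

theorem hasDerivAt_log_sq_add_sq {ε : ℝ} (hε : 0 < ε) (x : ℝ) :
    HasDerivAt (fun x => Real.log (x ^ 2 + ε ^ 2) / 2) (x / (x ^ 2 + ε ^ 2)) x := by
  have pos : x ^ 2 + ε ^ 2 ≠ 0 := by positivity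
  refine ((((hasDerivAt_id x).pow 2).add_const (ε ^ 2)).log pos |>.div_const 2).congr_deriv ?_
  simp
  field_simp

theorem abs_log_sq_add_sq_div_two_le {ε x : ℝ} (hε : ε ∈ Icc (0 : ℝ) 1) (hx : x ≠ 0) :
    |Real.log (x ^ 2 + ε ^ 2) / 2| ≤ |Real.log x| + 1 := by
  have sq_pos : 0 < x ^ 2 := by positivity
  have log_sq : Real.log (x ^ 2) = 2 * Real.log x := by rw [Real.log_pow]; norm_num
  have lower : Real.log (x ^ 2) ≤ Real.log (x ^ 2 + ε ^ 2) :=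
    Real.log_le_log sq_pos (by nlinarith [sq_nonneg ε])
  have upper : Real.log (x ^ 2 + ε ^ 2) ≤ 2 * |Real.log x| + 1 := by
    have eps_sq : ε ^ 2 ≤ 1 := pow_le_one₀ hε.1 hε.2
    rcases le_total (x ^ 2) 1 with h | h
    · have := Real.log_le_sub_one_of_pos (by positivity : 0 < x ^ 2 + ε ^ 2)
      linarith [abs_nonneg (Real.log x)]
    · have : Real.log (x ^ 2 + ε ^ 2) ≤ Real.log (2 * x ^ 2) :=
        Real.log_le_log (by positivity) (by linarith)
      rw [Real.log_mul two_ne_zero sq_pos.ne', log_sq] at this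
      linarith [Real.log_two_lt_d9, le_abs_self (Real.log x)]
  rw [log_sq] at lower
  rw [abs_le]
  constructor <;> linarith [neg_abs_le (Real.log x), abs_nonneg (Real.log x)]

theorem setIntegral_integral_conjugatePoisson {f : ℝ → ℝ} (hf : Integrable f) {ε : ℝ}
    (hε : 0 < ε) {a b : ℝ} (hab : a ≤ b) :
    ∫ t in Ioc a b, ∫ u, (t - u) / ((t - u) ^ 2 + ε ^ 2) * f u =
      ∫ u, (Real.log ((b - u) ^ 2 + ε ^ 2) / 2 - Real.log ((a - u) ^ 2 + ε ^ 2) / 2) * f u := by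
  have kernel_le (x : ℝ) : ‖x / (x ^ 2 + ε ^ 2)‖ ≤ ε⁻¹ := by
    rw [Real.norm_eq_abs, abs_div, abs_of_pos (by positivity : 0 < x ^ 2 + ε ^ 2),
      div_le_iff₀ (by positivity), inv_mul_eq_div, le_div_iff₀ hε]
    nlinarith [sq_nonneg (|x| - ε), sq_abs x, sq_nonneg |x|]
  have kernel_cont (u : ℝ) : Continuous fun t => (t - u) / ((t - u) ^ 2 + ε ^ 2) :=
    Continuous.div (by fun_prop) (by fun_prop) fun t => by positivity
  rw [integral_integral_swap]
  · congr with u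
    rw [integral_mul_const, ← intervalIntegral.integral_of_le hab,
      intervalIntegral.integral_eq_sub_of_hasDerivAt
        (fun t _ => (hasDerivAt_log_sq_add_sq hε (t - u)).comp_sub_const t u)
        ((kernel_cont u).intervalIntegrable a b)]
  · refine (hf.comp_snd _).bdd_mul (c := ε⁻¹) ?_ (.of_forall fun p => kernel_le _)
    exact (Measurable.aestronglyMeasurable (by fun_prop))

theorem tendsto_integral_log_sq_add_sq {f : ℝ → ℝ} (hf : Integrable f) {t : ℝ}
    (hlog : Integrable fun u => Real.log (t - u) * f u) {ε : ℕ → ℝ} (hε1 : ∀ n, ε n ∈ Icc 0 1)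
    (hε : Tendsto ε atTop (𝓝 0)) :
    (∀ n, Integrable fun u => Real.log ((t - u) ^ 2 + ε n ^ 2) / 2 * f u) ∧
    Tendsto (fun n => ∫ u, Real.log ((t - u) ^ 2 + ε n ^ 2) / 2 * f u) atTop
      (𝓝 (∫ u, Real.log (t - u) * f u)) := by
  have ne_ae : ∀ᵐ u, t - u ≠ 0 := by
    filter_upwards [Measure.ae_ne volume t] with u hu using sub_ne_zero.2 hu.symm
  have dominator : Integrable fun u => (|Real.log (t - u)| + 1) * |f u| :=
    (hlog.abs.add hf.abs).congr (.of_forall fun u => by simp [abs_mul, add_mul])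
  have meas (n : ℕ) : AEStronglyMeasurable fun u => Real.log ((t - u) ^ 2 + ε n ^ 2) / 2 * f u :=
    (Measurable.aestronglyMeasurable (by fun_prop)).mul hf.1
  have bound (n : ℕ) : ∀ᵐ u, ‖Real.log ((t - u) ^ 2 + ε n ^ 2) / 2 * f u‖ ≤
      (|Real.log (t - u)| + 1) * |f u| := by
    filter_upwards [ne_ae] with u hu
    rw [norm_mul]
    exact mul_le_mul_of_nonneg_right (abs_log_sq_add_sq_div_two_le (hε1 n) hu) (abs_nonneg _)
  refine ⟨fun n => dominator.mono' (meas n) (bound n),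
    tendsto_integral_of_dominated_convergence _ meas dominator bound ?_⟩
  filter_upwards [ne_ae] with u hu
  have : Tendsto (fun n => Real.log ((t - u) ^ 2 + ε n ^ 2) / 2) atTop
      (𝓝 (Real.log ((t - u) ^ 2 + 0 ^ 2) / 2)) :=
    (((hε.pow 2).const_add _).log (by simpa using hu)).div_const 2
  simpa using this.mul_const (f u)

/-- The logarithmic potential `∫ log |t - u| f(u) du`; `Real.log` is the logarithm of the absolute
value. -/
noncomputable def logPotential (f : ℝ → ℝ) (t : ℝ) : ℝ := ∫ u, Real.log (t - u) * f u

theorem exists_logPotential_sub_eq_integral {f : ℝ → ℝ} (hf : Integrable f) (hf2 : MemLp f 2)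
    (hlog : ∀ t, Integrable fun u => Real.log (t - u) * f u) :
    ∃ g : ℝ → ℝ, MemLp g 2 ∧ eLpNorm g 2 ≤ ENNReal.ofReal Real.pi * eLpNorm f 2 ∧
      ∀ a b, a ≤ b → logPotential f b - logPotential f a = ∫ t in a..b, g t := by
  set F := hf2.ofReal.toLp fun u => (f u : ℂ)
  set H : ℝ → ℝ := fun t => (hilbertTransform F t).re
  have H_memLp : MemLp H 2 := (Lp.memLp (hilbertTransform F)).re
  refine ⟨Real.pi • H, H_memLp.const_smul _, ?_, fun a b hab => ?_⟩
  · rw [eLpNorm_const_smul, Real.enorm_of_nonneg Real.pi_pos.le, ← eLpNorm_toLp_ofReal hf2]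
    gcongr
    exact eLpNorm_re_hilbertTransform_le F
  · set ε : ℕ → ℝ := fun n => 1 / ((n : ℝ) + 1)
    have ε_pos (n : ℕ) : 0 < ε n := Nat.one_div_pos_of_nat
    have ε_mem (n : ℕ) : ε n ∈ Icc (0 : ℝ) 1 := ⟨(ε_pos n).le, by
      simpa [ε] using inv_le_one_of_one_le₀ (by linarith [(Nat.cast_nonneg n : (0 : ℝ) ≤ n)])⟩
    have ε_lim : Tendsto ε atTop (𝓝 0) := tendsto_one_div_add_atTop_nhds_zero_nat
    have log_lim (t : ℝ) := tendsto_integral_log_sq_add_sq hf (hlog t) ε_mem ε_lim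
    have hilbert_lim := tendsto_integral_conjugatePoisson hf hf2 ε_pos ε_lim a b
    simp_rw [setIntegral_integral_conjugatePoisson hf (ε_pos _) hab, sub_mul,
      integral_sub ((log_lim b).1 _) ((log_lim a).1 _)] at hilbert_lim
    rw [intervalIntegral.integral_of_le hab]
    simp only [Pi.smul_apply, smul_eq_mul, integral_const_mul]
    exact tendsto_nhds_unique ((log_lim b).2.sub (log_lim a).2) hilbert_lim

theorem sq_log_le {x : ℝ} (hx : 0 < x) : Real.log x ^ 2 ≤ 16 * x ^ (-1 / 2 : ℝ) + x ^ 2 := by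
  rcases le_total x 1 with h | h
  · have root_log := (Real.abs_log_mul_self_rpow_lt x (1 / 4) hx h (by norm_num)).le
    have cancel : x ^ (-1 / 2 : ℝ) * (x ^ (1 / 4 : ℝ)) ^ 2 = 1 := by
      rw [← Real.rpow_natCast, ← Real.rpow_mul hx.le, ← Real.rpow_add hx]; norm_num
    have root_log_sq : Real.log x ^ 2 * (x ^ (1 / 4 : ℝ)) ^ 2 ≤ 16 := by
      rw [← mul_pow, ← sq_abs]
      calc _ ≤ (1 / (1 / 4 : ℝ)) ^ 2 := by gcongr
        _ = 16 := by norm_num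
    calc Real.log x ^ 2 = x ^ (-1 / 2 : ℝ) * (Real.log x ^ 2 * (x ^ (1 / 4 : ℝ)) ^ 2) := by
          linear_combination -(Real.log x ^ 2) * cancel
      _ ≤ x ^ (-1 / 2 : ℝ) * 16 := by gcongr
      _ ≤ _ := by linarith [sq_nonneg x]
  · have : Real.log x ^ 2 ≤ x ^ 2 :=
      pow_le_pow_left₀ (Real.log_nonneg h) (Real.log_le_self hx.le) 2
    linarith [Real.rpow_nonneg hx.le (-1 / 2)]

theorem intervalIntegrable_sq_log (a b : ℝ) :
    IntervalIntegrable (fun x => Real.log x ^ 2) volume a b := by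
  have from_zero_of_nonneg {c : ℝ} (hc : 0 ≤ c) :
      IntervalIntegrable (fun x => Real.log x ^ 2) volume 0 c := by
    refine (((intervalIntegral.intervalIntegrable_rpow' (r := -1 / 2) (by norm_num)).const_mul
      16).add (intervalIntegral.intervalIntegrable_pow 2)).mono_fun
      (Measurable.aestronglyMeasurable (by fun_prop))
      ((ae_restrict_mem measurableSet_uIoc).mono fun x hx => ?_)
    rw [uIoc_of_le hc] at hx
    exact (Real.norm_of_nonneg (sq_nonneg _)).trans_le ((sq_log_le hx.1).trans (le_abs_self _))
  have from_zero (c : ℝ) : IntervalIntegrable (fun x => Real.log x ^ 2) volume 0 c := by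
    rcases le_total 0 c with hc | hc
    · exact from_zero_of_nonneg hc
    · rw [IntervalIntegrable.iff_comp_neg]
      simpa using from_zero_of_nonneg (neg_nonneg.2 hc)
  exact (from_zero a).symm.trans (from_zero b)

theorem integrable_log_sub_mul {f : ℝ → ℝ} (hf2 : MemLp f 2) {a b : ℝ}
    (hf_supp : Function.support f ⊆ Ioc a b) (t : ℝ) :
    Integrable fun u => Real.log (t - u) * f u := by
  have log_memLp : MemLp (fun u => Real.log (t - u)) 2 (volume.restrict (Ioc a b)) := by
    rw [memLp_two_iff_integrable_sq (Measurable.aestronglyMeasurable (by fun_prop))]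
    have := (intervalIntegrable_sq_log (t - a) (t - b)).comp_sub_left t
    simp only [sub_sub_cancel] at this
    exact this.1
  rw [← integrableOn_iff_integrable_of_support_subset
    ((Function.support_mul_subset_right _ _).trans hf_supp)]
  exact log_memLp.integrable_mul (hf2.restrict _)

/-! ### Integral operators with kernels of degree `-1` -/

theorem sq_lintegral_mul_le_lintegral_mul_sq {X : Type*} [MeasurableSpace X] {μ : Measure X}
    {w h : X → ℝ≥0∞} (hw : AEMeasurable w μ) (hh : AEMeasurable h μ) :
    (∫⁻ x, w x * h x ∂μ) ^ 2 ≤ (∫⁻ x, w x ∂μ) * ∫⁻ x, w x * h x ^ 2 ∂μ := by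
  have sqrt_sq (a : ℝ≥0∞) : (a ^ (1 / 2 : ℝ)) ^ 2 = a := by
    rw [← ENNReal.rpow_two, ← ENNReal.rpow_mul]; norm_num
  have split (x : X) : w x * h x = w x ^ (1 / 2 : ℝ) * (w x ^ (1 / 2 : ℝ) * h x) := by
    rw [← mul_assoc, ← sq, sqrt_sq]
  have cauchy_schwarz := ENNReal.lintegral_mul_le_Lp_mul_Lq μ Real.HolderConjugate.two_two
    (hw.pow_const (1 / 2 : ℝ)) ((hw.pow_const (1 / 2 : ℝ)).mul hh)
  simpa only [Pi.mul_apply, ← split, ENNReal.rpow_two, mul_pow, sqrt_sq] using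
    pow_le_pow_left₀ zero_le cauchy_schwarz 2

theorem setLIntegral_Ioi_zero_comp_mul_left (g : ℝ → ℝ≥0∞) {c : ℝ} (hc : 0 < c) :
    ENNReal.ofReal c * ∫⁻ y in Ioi 0, g (c * y) = ∫⁻ u in Ioi 0, g u := by
  have image : (c * ·) '' Ioi (0 : ℝ) = Ioi 0 := by simp [image_mul_left_Ioi hc]
  have deriv (y : ℝ) (_ : y ∈ Ioi (0 : ℝ)) : HasDerivWithinAt (c * ·) c (Ioi 0) y := by
    simpa using ((hasDerivAt_id y).const_mul c).hasDerivWithinAt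
  rw [← lintegral_const_mul' _ _ ENNReal.ofReal_ne_top]
  conv_rhs => rw [← image]
  rw [lintegral_image_eq_lintegral_abs_deriv_mul measurableSet_Ioi deriv
    (mul_right_injective₀ hc.ne').injOn, abs_of_pos hc]

-- Minkowski's inequality for the dilates `g (· * y)`, whose `L²` norms are `y ^ (-1 / 2) * ‖g‖`.
theorem lintegral_sq_lintegral_mul_comp_mul_le {ρ g : ℝ → ℝ≥0∞} (hρ : Measurable ρ)
    (hg : Measurable g) :
    ∫⁻ σ in Ioi 0, (∫⁻ y in Ioi 0, ρ y * g (σ * y)) ^ 2 ≤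
      (∫⁻ y in Ioi 0, ρ y * ENNReal.ofReal (y ^ (-1 / 2 : ℝ))) ^ 2 * ∫⁻ u in Ioi 0, g u ^ 2 := by
  set w : ℝ → ℝ≥0∞ := fun y => ρ y * ENNReal.ofReal (y ^ (-1 / 2 : ℝ))
  set h : ℝ → ℝ → ℝ≥0∞ := fun σ y => ENNReal.ofReal (y ^ (1 / 2 : ℝ)) * g (σ * y)
  set A := ∫⁻ y in Ioi 0, w y
  have hw : Measurable w := by fun_prop
  have split {σ y : ℝ} (hy : 0 < y) : ρ y * g (σ * y) = w y * h σ y := by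
    have : ENNReal.ofReal (y ^ (-1 / 2 : ℝ)) * ENNReal.ofReal (y ^ (1 / 2 : ℝ)) = 1 := by
      rw [← ENNReal.ofReal_mul (by positivity), ← Real.rpow_add hy]; norm_num
    calc ρ y * g (σ * y) = ρ y * 1 * g (σ * y) := by rw [mul_one]
      _ = w y * h σ y := by rw [← this]; ring
  have norm_dilate {y : ℝ} (hy : 0 < y) :
      ∫⁻ σ in Ioi 0, h σ y ^ 2 = ∫⁻ u in Ioi 0, g u ^ 2 := by
    have : ENNReal.ofReal (y ^ (1 / 2 : ℝ)) ^ 2 = ENNReal.ofReal y := by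
      rw [← ENNReal.ofReal_pow (by positivity), ← Real.sqrt_eq_rpow, Real.sq_sqrt hy.le]
    simp only [h, mul_pow, this]
    rw [lintegral_const_mul' _ _ ENNReal.ofReal_ne_top,
      ← setLIntegral_Ioi_zero_comp_mul_left (fun u => g u ^ 2) hy]
    simp only [mul_comm y]
  calc ∫⁻ σ in Ioi 0, (∫⁻ y in Ioi 0, ρ y * g (σ * y)) ^ 2
      = ∫⁻ σ in Ioi 0, (∫⁻ y in Ioi 0, w y * h σ y) ^ 2 :=
        lintegral_congr fun σ => by rw [setLIntegral_congr_fun measurableSet_Ioi fun _ => split]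
    _ ≤ ∫⁻ σ in Ioi 0, A * ∫⁻ y in Ioi 0, w y * h σ y ^ 2 := lintegral_mono fun σ =>
        sq_lintegral_mul_le_lintegral_mul_sq hw.aemeasurable (by fun_prop)
    _ = A * ∫⁻ y in Ioi 0, w y * ∫⁻ σ in Ioi 0, h σ y ^ 2 := by
        rw [lintegral_const_mul _ (by fun_prop), lintegral_lintegral_swap (by fun_prop)]
        exact congrArg _ (lintegral_congr fun y => lintegral_const_mul _ (by fun_prop))
    _ = A * ∫⁻ y in Ioi 0, w y * ∫⁻ u in Ioi 0, g u ^ 2 := by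
        rw [setLIntegral_congr_fun measurableSet_Ioi fun y hy => by rw [norm_dilate hy]]
    _ = A ^ 2 * ∫⁻ u in Ioi 0, g u ^ 2 := by rw [lintegral_mul_const _ hw, sq, mul_assoc]

/-- The kernel `(u / σ) ^ α / (u - σ)` with its singularity `1 / (u - σ)` removed. -/
noncomputable def regKernel (α σ u : ℝ) : ℝ := ((u / σ) ^ α - 1) / (u - σ)

section RegKernel

variable {α σ u : ℝ}

theorem measurable_regKernel : Measurable (Function.uncurry (regKernel α)) := by
  unfold Function.uncurry regKernel; fun_prop

theorem regKernel_mul_mul {c : ℝ} (hc : c ≠ 0) (σ u : ℝ) :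
    regKernel α (c * σ) (c * u) = c⁻¹ * regKernel α σ u := by
  rw [regKernel, regKernel, mul_div_mul_left _ _ hc, ← mul_sub]
  field_simp

theorem regKernel_eq_inv_mul (hσ : σ ≠ 0) (u : ℝ) :
    regKernel α σ u = σ⁻¹ * regKernel α 1 (u / σ) := by
  rw [← regKernel_mul_mul hσ, mul_one, mul_div_cancel₀ _ hσ]

theorem abs_regKernel_one_le (h0 : 0 ≤ α) (h1 : α ≤ 1) {y : ℝ} (hy : 0 < y) :
    |regKernel α 1 y| ≤ min 1 (y ^ (α - 1)) := by
  have factor : y ^ α = y ^ (α - 1) * y := (Real.rpow_sub_one hy.ne' α ▸ by field_simp)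
  rw [regKernel, div_one, abs_div]
  rcases lt_trichotomy y 1 with h | rfl | h
  · have : y ≤ y ^ α := by simpa using Real.rpow_le_rpow_of_exponent_ge hy h.le h1
    have pow_le : y ^ α ≤ 1 := Real.rpow_le_one hy.le h.le h0
    have le_pow : 1 ≤ y ^ (α - 1) :=
      Real.one_le_rpow_of_pos_of_le_one_of_nonpos hy h.le (by linarith)
    rw [min_eq_left le_pow, abs_of_nonpos (by linarith), abs_of_neg (by linarith)]
    exact div_le_one_of_le₀ (by linarith) (by linarith)
  · simp
  · have : 1 ≤ y ^ α := Real.one_le_rpow h.le h0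
    have pow_le : y ^ (α - 1) ≤ 1 := Real.rpow_le_one_of_one_le_of_nonpos h.le (by linarith)
    rw [min_eq_right pow_le, abs_of_nonneg (by linarith), abs_of_pos (by linarith),
      div_le_iff₀ (by linarith)]
    linarith

theorem abs_regKernel_le (h0 : 0 ≤ α) (h1 : α ≤ 1) (hσ : 0 < σ) (hu : 0 < u) :
    |regKernel α σ u| ≤ u ^ (α - 1) * σ ^ (-α) := by
  rw [regKernel_eq_inv_mul hσ.ne', abs_mul, abs_of_pos (inv_pos.2 hσ)]
  calc σ⁻¹ * |regKernel α 1 (u / σ)| ≤ σ⁻¹ * (u / σ) ^ (α - 1) := by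
        gcongr
        exact (abs_regKernel_one_le h0 h1 (div_pos hu hσ)).trans (min_le_right _ _)
    _ = u ^ (α - 1) * σ ^ (-α) := by
        rw [Real.div_rpow hu.le hσ.le, Real.rpow_neg hσ.le, Real.rpow_sub_one hσ.ne']
        field_simp

theorem integrableOn_regKernel (h0 : 0 ≤ α) (h1 : α < 1) (hu : 0 < u) (τ : ℝ) :
    IntegrableOn (fun σ => regKernel α σ u) (Ioc 0 τ) := by
  refine Integrable.mono' (g := fun σ => u ^ (α - 1) * σ ^ (-α)) ?_
    measurable_regKernel.of_uncurry_right.aestronglyMeasurable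
    ((ae_restrict_mem measurableSet_Ioc).mono fun σ hσ => abs_regKernel_le h0 h1.le hσ.1 hu)
  exact (intervalIntegral.intervalIntegrable_rpow' (by linarith)).1.const_mul _

/-- The weighted integral of `regKernel α 1` bounding the norm on `L²(0, ∞)` of the integral
operator with the (homogeneous of degree `-1`) kernel `regKernel α`. -/
noncomputable def regKernelBound (α : ℝ) : ℝ≥0∞ :=
  ∫⁻ y in Ioi 0, ‖regKernel α 1 y‖ₑ * ENNReal.ofReal (y ^ (-1 / 2 : ℝ))

theorem regKernelBound_lt_top (h0 : 0 ≤ α) (h2 : α < 1 / 2) : regKernelBound α < ∞ := by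
  have integrable_near_zero : IntegrableOn (fun y : ℝ => y ^ (-1 / 2 : ℝ)) (Ioc 0 1) :=
    (intervalIntegral.intervalIntegrable_rpow' (by norm_num)).1
  have integrable_near_top : IntegrableOn (fun y : ℝ => y ^ (α - 3 / 2)) (Ioi 1) :=
    integrableOn_Ioi_rpow_of_lt (by linarith) one_pos
  have bound {y : ℝ} (hy : 0 < y) :
      |regKernel α 1 y| * y ^ (-1 / 2 : ℝ) ≤ min (y ^ (-1 / 2 : ℝ)) (y ^ (α - 3 / 2)) :=
    calc _ ≤ min 1 (y ^ (α - 1)) * y ^ (-1 / 2 : ℝ) := by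
          gcongr
          exact abs_regKernel_one_le h0 (by linarith) hy
      _ = _ := by
          rw [min_mul_of_nonneg _ _ (by positivity), one_mul, ← Real.rpow_add hy]
          ring_nf
  have enorm_le {y b : ℝ} (hb : |regKernel α 1 y| * y ^ (-1 / 2 : ℝ) ≤ b) :
      ‖regKernel α 1 y‖ₑ * ENNReal.ofReal (y ^ (-1 / 2 : ℝ)) ≤ ‖b‖ₑ := by
    rw [Real.enorm_eq_ofReal_abs, ← ENNReal.ofReal_mul (abs_nonneg _), Real.enorm_eq_ofReal_abs]
    exact ENNReal.ofReal_le_ofReal (hb.trans (le_abs_self _))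
  rw [regKernelBound, ← Ioc_union_Ioi_eq_Ioi zero_le_one,
    lintegral_union measurableSet_Ioi Ioc_disjoint_Ioi_same]
  refine ENNReal.add_lt_top.2
    ⟨(setLIntegral_mono' measurableSet_Ioc fun y hy => ?_).trans_lt integrable_near_zero.2,
      (setLIntegral_mono' measurableSet_Ioi fun y hy => ?_).trans_lt integrable_near_top.2⟩
  · exact enorm_le ((bound hy.1).trans (min_le_left _ _))
  · have hy0 : 0 < y := one_pos.trans hy
    exact enorm_le ((bound hy0).trans (min_le_right _ _))

end RegKernel

theorem sq_eLpNorm_two {X E : Type*} [MeasurableSpace X] [NormedAddCommGroup E] (f : X → E)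
    (μ : Measure X) : eLpNorm f 2 μ ^ 2 = ∫⁻ x, ‖f x‖ₑ ^ 2 ∂μ := by
  simpa using eLpNorm_nnreal_pow_eq_lintegral (f := f) (μ := μ) (two_ne_zero (α := NNReal))

theorem toReal_sq_eLpNorm_two {X : Type*} [MeasurableSpace X] {μ : Measure X} {f : X → ℝ}
    (hf : AEStronglyMeasurable f μ) : (eLpNorm f 2 μ ^ 2).toReal = ∫ x, f x ^ 2 ∂μ := by
  rw [sq_eLpNorm_two, integral_eq_lintegral_of_nonneg_ae (ae_of_all _ fun x => sq_nonneg (f x))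
    (hf.pow 2)]
  simp only [← Real.enorm_of_nonneg (sq_nonneg _), enorm_pow]

section RegKernelOperator

variable {α : ℝ} {f : ℝ → ℝ}

theorem aestronglyMeasurable_regKernel_mul {μ ν : Measure ℝ} [SFinite ν]
    (hf : AEStronglyMeasurable f ν) :
    AEStronglyMeasurable (Function.uncurry fun σ u => regKernel α σ u * f u) (μ.prod ν) :=
  measurable_regKernel.aestronglyMeasurable.mul hf.comp_snd

theorem lintegral_sq_lintegral_regKernel_mul_le
    (hf : AEStronglyMeasurable f (volume.restrict (Ioi 0))) :
    ∫⁻ σ in Ioi 0, (∫⁻ u in Ioi 0, ‖regKernel α σ u * f u‖ₑ) ^ 2 ≤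
      regKernelBound α ^ 2 * eLpNorm f 2 (volume.restrict (Ioi 0)) ^ 2 := by
  set g : ℝ → ℝ≥0∞ := fun u => ‖hf.mk f u‖ₑ
  have hg : Measurable g := hf.measurable_mk.enorm
  have dilate {σ : ℝ} (hσ : 0 < σ) : ∫⁻ u in Ioi 0, ‖regKernel α σ u * f u‖ₑ =
      ∫⁻ y in Ioi 0, ‖regKernel α 1 y‖ₑ * g (σ * y) := by
    have homogeneity (y : ℝ) : ENNReal.ofReal σ * (‖regKernel α σ (σ * y)‖ₑ * g (σ * y)) =
        ‖regKernel α 1 y‖ₑ * g (σ * y) := by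
      rw [← mul_assoc, ← Real.enorm_of_nonneg hσ.le, ← enorm_mul, regKernel_eq_inv_mul hσ.ne',
        mul_div_cancel_left₀ _ hσ.ne', mul_inv_cancel_left₀ hσ.ne']
    calc _ = ∫⁻ u in Ioi 0, ‖regKernel α σ u‖ₑ * g u := by
          refine lintegral_congr_ae (hf.ae_eq_mk.mono fun u hu => ?_)
          simp only [g, enorm_mul, hu]
      _ = _ := by
          rw [← setLIntegral_Ioi_zero_comp_mul_left _ hσ,
            ← lintegral_const_mul' _ _ ENNReal.ofReal_ne_top]
          exact lintegral_congr homogeneity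
  rw [setLIntegral_congr_fun measurableSet_Ioi fun σ hσ => by rw [dilate hσ],
    eLpNorm_congr_ae hf.ae_eq_mk, sq_eLpNorm_two]
  exact lintegral_sq_lintegral_mul_comp_mul_le measurable_regKernel.of_uncurry_left.enorm hg

theorem eLpNorm_integral_regKernel_mul_le
    (hf : AEStronglyMeasurable f (volume.restrict (Ioi 0))) :
    eLpNorm (fun σ => ∫ u in Ioi 0, regKernel α σ u * f u) 2 (volume.restrict (Ioi 0)) ≤
      regKernelBound α * eLpNorm f 2 (volume.restrict (Ioi 0)) := by
  rw [← ENNReal.pow_le_pow_left_iff two_ne_zero, sq_eLpNorm_two, mul_pow]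
  refine (lintegral_mono fun σ => ?_).trans (lintegral_sq_lintegral_regKernel_mul_le hf)
  gcongr
  exact enorm_integral_le_lintegral_enorm _

theorem memLp_integral_regKernel_mul (h0 : 0 ≤ α) (h2 : α < 1 / 2)
    (hf : MemLp f 2 (volume.restrict (Ioi 0))) :
    MemLp (fun σ => ∫ u in Ioi 0, regKernel α σ u * f u) 2 (volume.restrict (Ioi 0)) :=
  ⟨(aestronglyMeasurable_regKernel_mul hf.1).integral_prod_right',
    (eLpNorm_integral_regKernel_mul_le hf.1).trans_lt
      (ENNReal.mul_lt_top (regKernelBound_lt_top h0 h2) hf.2)⟩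

theorem integrable_regKernel_mul (h0 : 0 ≤ α) (h2 : α < 1 / 2)
    (hf : MemLp f 2 (volume.restrict (Ioi 0))) (τ : ℝ) :
    Integrable (Function.uncurry fun σ u => regKernel α σ u * f u)
      ((volume.restrict (Ioc 0 τ)).prod (volume.restrict (Ioi 0))) := by
  have hm := aestronglyMeasurable_regKernel_mul (α := α) (μ := volume.restrict (Ioc 0 τ)) hf.1
  have cauchy_schwarz := sq_lintegral_mul_le_lintegral_mul_sq (μ := volume.restrict (Ioc 0 τ))
    (w := 1) aemeasurable_const hm.enorm.lintegral_prod_right'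
  simp only [Pi.one_apply, one_mul, setLIntegral_one, Real.volume_Ioc,
    ← lintegral_prod _ hm.enorm] at cauchy_schwarz
  refine ⟨hm, (ENNReal.pow_lt_top_iff.1 (cauchy_schwarz.trans_lt
    (ENNReal.mul_lt_top ENNReal.ofReal_lt_top ?_))).resolve_right two_ne_zero⟩
  calc ∫⁻ σ in Ioc 0 τ, (∫⁻ u in Ioi 0, ‖regKernel α σ u * f u‖ₑ) ^ 2
      ≤ ∫⁻ σ in Ioi 0, (∫⁻ u in Ioi 0, ‖regKernel α σ u * f u‖ₑ) ^ 2 :=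
        lintegral_mono_set Ioc_subset_Ioi_self
    _ ≤ regKernelBound α ^ 2 * eLpNorm f 2 (volume.restrict (Ioi 0)) ^ 2 :=
        lintegral_sq_lintegral_regKernel_mul_le hf.1
    _ < ∞ := ENNReal.mul_lt_top (ENNReal.pow_lt_top (regKernelBound_lt_top h0 h2))
        (ENNReal.pow_lt_top hf.2)

end RegKernelOperator

/-! ### The kernel of the composed fractional integrals -/

theorem rlKernel_mul {β c t : ℝ} (hc : 0 ≤ c) (ht : 0 ≤ t) :
    rlKernel β (c * t) = c ^ (β - 1) * rlKernel β t := by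
  rw [rlKernel, rlKernel, Real.mul_rpow hc ht, mul_div_assoc]

theorem rlKernel_nonneg {β t : ℝ} (hβ : 0 ≤ β) (ht : 0 ≤ t) : 0 ≤ rlKernel β t :=
  div_nonneg (Real.rpow_nonneg ht _) (Real.Gamma_nonneg_of_nonneg hβ)

/-- The kernel of the composition `I_{0+}^{1-α} I_{T-}^α` of fractional integrals of total order
one; it does not depend on `T`. -/
noncomputable def mixedKernel (α τ u : ℝ) : ℝ :=
  ∫ s in Ioo 0 (min τ u), rlKernel (1 - α) (τ - s) * rlKernel α (u - s)

section MixedKernel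

variable {α τ u x : ℝ}

theorem mixedKernel_nonneg (h0 : 0 ≤ α) (h1 : α ≤ 1) (τ u : ℝ) : 0 ≤ mixedKernel α τ u :=
  setIntegral_nonneg measurableSet_Ioo fun s hs => by
    obtain ⟨hsτ, hsu⟩ := lt_min_iff.1 hs.2
    exact mul_nonneg (rlKernel_nonneg (by linarith) (by linarith))
      (rlKernel_nonneg h0 (by linarith))

theorem mixedKernel_mul_mul {c : ℝ} (hc : 0 < c) (τ u : ℝ) :
    mixedKernel α (c * τ) (c * u) = mixedKernel α τ u := by
  have scale := Measure.setIntegral_comp_smul_of_pos volume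
    (fun s => rlKernel (1 - α) (c * τ - s) * rlKernel α (c * u - s)) (Ioo 0 (min τ u)) hc
  rw [LinearOrderedField.smul_Ioo hc, mul_zero, mul_min_of_nonneg _ _ hc.le,
    Module.finrank_self, pow_one, smul_eq_mul, eq_inv_mul_iff_mul_eq₀ hc.ne',
    ← integral_const_mul] at scale
  rw [mixedKernel, ← scale]
  refine setIntegral_congr_fun measurableSet_Ioo fun s hs => ?_
  obtain ⟨hsτ, hsu⟩ := lt_min_iff.1 hs.2
  have total_degree : c * (c ^ (1 - α - 1) * c ^ (α - 1)) = 1 := by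
    rw [← Real.rpow_add hc, show 1 - α - 1 + (α - 1) = -1 by ring, Real.rpow_neg_one,
      mul_inv_cancel₀ hc.ne']
  simp only [smul_eq_mul, ← mul_sub]
  rw [rlKernel_mul hc.le (sub_pos.2 hsτ).le, rlKernel_mul hc.le (sub_pos.2 hsu).le]
  linear_combination (rlKernel (1 - α) (τ - s) * rlKernel α (u - s)) * total_degree

/-- The Möbius involution of the line exchanging `0` and `x`, and `1` and `∞`. -/
noncomputable def mobius (x s : ℝ) : ℝ := (x - s) / (1 - s)

theorem one_sub_mobius {s : ℝ} (hs : s ≠ 1) : 1 - mobius x s = (1 - x) / (1 - s) := by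
  rw [mobius]
  have := sub_ne_zero.2 hs.symm
  field_simp
  ring

theorem sub_mobius {s : ℝ} (hs : s ≠ 1) : x - mobius x s = s * (1 - x) / (1 - s) := by
  rw [mobius]
  have := sub_ne_zero.2 hs.symm
  field_simp
  ring

theorem mobius_mobius (hx : x ≠ 1) {s : ℝ} (hs : s ≠ 1) : mobius x (mobius x s) = s := by
  have hx' := sub_ne_zero.2 hx.symm
  have hs' := sub_ne_zero.2 hs.symm
  rw [mobius, one_sub_mobius hs, sub_mobius hs]
  field_simp

theorem hasDerivAt_mobius (x : ℝ) {s : ℝ} (hs : s ≠ 1) :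
    HasDerivAt (mobius x) ((x - 1) / (1 - s) ^ 2) s := by
  refine (((hasDerivAt_id s).const_sub x).div ((hasDerivAt_id s).const_sub 1)
    (sub_ne_zero.2 hs.symm)).congr_deriv ?_
  simp only [id]
  ring

theorem bijOn_mobius_of_lt_one (hx : x < 1) : BijOn (mobius x) (Ioo 0 x) (Ioo 0 x) := by
  have mapsTo : MapsTo (mobius x) (Ioo 0 x) (Ioo 0 x) := fun s hs => by
    have hs1 : 0 < 1 - s := by linarith [hs.2]
    exact ⟨div_pos (sub_pos.2 hs.2) hs1, sub_pos.1 (sub_mobius (by linarith) ▸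
      div_pos (mul_pos hs.1 (sub_pos.2 hx)) hs1)⟩
  have involution : LeftInvOn (mobius x) (mobius x) (Ioo 0 x) := fun s hs =>
    mobius_mobius hx.ne (hs.2.trans hx).ne
  exact InvOn.bijOn ⟨involution, involution⟩ mapsTo mapsTo

theorem bijOn_mobius_of_one_lt (hx : 1 < x) : BijOn (mobius x) (Ioo 0 1) (Ioi x) := by
  refine InvOn.bijOn ⟨fun s hs => mobius_mobius hx.ne' hs.2.ne,
    fun y hy => mobius_mobius hx.ne' (hx.trans hy).ne'⟩ (fun s hs => ?_) (fun y hy => ?_)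
  · exact sub_neg.1 (sub_mobius hs.2.ne ▸
      div_neg_of_neg_of_pos (mul_neg_of_pos_of_neg hs.1 (sub_neg.2 hx)) (sub_pos.2 hs.2))
  · have hy1 : 1 < y := hx.trans hy
    exact ⟨div_pos_of_neg_of_neg (sub_neg.2 hy) (sub_neg.2 hy1), sub_pos.1 (one_sub_mobius hy1.ne' ▸
      div_pos_of_neg_of_neg (sub_neg.2 hx) (sub_neg.2 hy1))⟩

theorem mixedKernel_one_eq_integral {S : Set ℝ} (hx : x ≠ 1)
    (hS : BijOn (mobius x) (Ioo 0 (min x 1)) S) :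
    mixedKernel α x 1 =
      (Real.Gamma (1 - α) * Real.Gamma α)⁻¹ * ∫ y in S, y ^ (-α) / |1 - y| := by
  have ne_one {s : ℝ} (hs : s ∈ Ioo 0 (min x 1)) : s ≠ 1 := (lt_min_iff.1 hs.2).2.ne
  rw [mixedKernel, ← hS.image_eq, integral_image_eq_integral_abs_deriv_smul measurableSet_Ioo
    (fun s hs => (hasDerivAt_mobius x (ne_one hs)).hasDerivWithinAt) hS.injOn,
    ← integral_const_mul]
  refine setIntegral_congr_fun measurableSet_Ioo fun s hs => ?_
  have hsx : 0 < x - s := sub_pos.2 (lt_min_iff.1 hs.2).1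
  have hs1 : 0 < 1 - s := sub_pos.2 (lt_min_iff.1 hs.2).2
  have hx1 : |1 - x| ≠ 0 := abs_ne_zero.2 (sub_ne_zero.2 hx.symm)
  have exponent : 1 - α - 1 = -α := by ring
  simp only [smul_eq_mul]
  rw [one_sub_mobius (ne_one hs), mobius, rlKernel, rlKernel, exponent, abs_div, abs_div,
    abs_sub_comm x 1, abs_of_pos hs1, abs_of_pos (pow_pos hs1 2), Real.div_rpow hsx.le hs1.le,
    Real.rpow_neg hs1.le, Real.rpow_sub_one hs1.ne']
  field_simp

theorem intervalIntegrable_regKernel_one (h0 : 0 ≤ α) (h1 : α < 1) {a b : ℝ} (ha : 0 ≤ a)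
    (hb : 0 ≤ b) : IntervalIntegrable (fun y => regKernel α y 1) volume a b := by
  have from_zero {c : ℝ} (hc : 0 ≤ c) :
      IntervalIntegrable (fun y => regKernel α y 1) volume 0 c :=
    (intervalIntegrable_iff_integrableOn_Ioc_of_le hc).2 (integrableOn_regKernel h0 h1 one_pos c)
  exact (from_zero ha).symm.trans (from_zero hb)

theorem integral_rpow_neg_div_one_sub (h0 : 0 ≤ α) (h1 : α < 1) {a b : ℝ} (ha : 0 ≤ a)
    (hb : 0 ≤ b) (h : (1 : ℝ) ∉ uIcc a b) :
    ∫ y in a..b, y ^ (-α) / (1 - y) =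
      Real.log (1 - a) - Real.log (1 - b) + ∫ y in a..b, regKernel α y 1 := by
  have ne_one {y : ℝ} (hy : y ∈ uIcc a b) : 1 - y ≠ 0 :=
    sub_ne_zero.2 (ne_of_mem_of_not_mem hy h).symm
  have nonneg {y : ℝ} (hy : y ∈ uIcc a b) : 0 ≤ y := (le_min ha hb).trans hy.1
  have zero_notMem : (0 : ℝ) ∉ uIcc (1 - b) (1 - a) := fun h0 => h <| by
    rcases mem_uIcc.1 h0 with h0 | h0
    · exact mem_uIcc.2 (Or.inl ⟨by linarith, by linarith⟩)
    · exact mem_uIcc.2 (Or.inr ⟨by linarith, by linarith⟩)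
  have integral_inv : ∫ y in a..b, (1 - y)⁻¹ = Real.log (1 - a) - Real.log (1 - b) := by
    rw [intervalIntegral.integral_comp_sub_left (fun x => x⁻¹), integral_inv zero_notMem,
      Real.log_div (ne_one left_mem_uIcc) (ne_one right_mem_uIcc)]
  have integrable_inv : IntervalIntegrable (fun y => (1 - y)⁻¹) volume a b :=
    (ContinuousOn.inv₀ (by fun_prop) fun y => ne_one).intervalIntegrable
  rw [← integral_inv, ← intervalIntegral.integral_add integrable_inv
    (intervalIntegrable_regKernel_one h0 h1 ha hb)]
  refine intervalIntegral.integral_congr fun y hy => ?_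
  simp only [regKernel, one_div, Real.inv_rpow (nonneg hy), ← Real.rpow_neg (nonneg hy)]
  have := ne_one hy
  field_simp
  ring

theorem integrableOn_Ioi_rpow_neg_div (h0 : 0 < α) {c : ℝ} (hc : 1 < c) :
    IntegrableOn (fun y : ℝ => y ^ (-α) / (1 - y)) (Ioi c) := by
  have hc0 : 0 < c := one_pos.trans hc
  refine Integrable.mono' ((integrableOn_Ioi_rpow_of_lt (a := -α - 1) (by linarith) hc0).const_mul
    (c / (c - 1))) (Measurable.aestronglyMeasurable (by fun_prop))
    ((ae_restrict_mem measurableSet_Ioi).mono fun y (hy : c < y) => ?_)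
  have hy0 : 0 < y := hc0.trans hy
  have hy1 : 0 < y - 1 := by linarith
  have : 0 < c - 1 := sub_pos.2 hc
  rw [norm_div, norm_sub_rev, Real.norm_of_nonneg (by positivity), Real.norm_of_nonneg hy1.le,
    Real.rpow_sub_one hy0.ne', div_mul_div_comm, div_le_div_iff₀ hy1 (by positivity)]
  have : 0 < y ^ (-α) := by positivity
  nlinarith

/-- The jump across the diagonal `τ = u` of the part of `mixedKernel α` that remains when its
logarithmic singularity is removed, up to the factor `Γ(1-α)Γ(α)`. -/
noncomputable def kernelJump (α : ℝ) : ℝ :=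
  -(∫ y in Ioi (2 : ℝ), y ^ (-α) / (1 - y)) - ∫ y in (0 : ℝ)..2, regKernel α y 1

theorem mixedKernel_one_of_lt (h0 : 0 ≤ α) (h1 : α < 1) (hx0 : 0 < x) (hx : x < 1) :
    mixedKernel α x 1 = (Real.Gamma (1 - α) * Real.Gamma α)⁻¹ *
      (-Real.log (1 - x) + ∫ y in (0 : ℝ)..x, regKernel α y 1) := by
  rw [mixedKernel_one_eq_integral hx.ne (by simpa [hx.le] using bijOn_mobius_of_lt_one hx),
    setIntegral_congr_fun measurableSet_Ioo fun y hy => by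
      rw [abs_of_pos (sub_pos.2 (hy.2.trans hx))],
    ← integral_Ioc_eq_integral_Ioo, ← intervalIntegral.integral_of_le hx0.le,
    integral_rpow_neg_div_one_sub h0 h1 le_rfl hx0.le (by simp [uIcc_of_le hx0.le, hx]),
    sub_zero, Real.log_one, zero_sub]

theorem mixedKernel_one_of_gt (h0 : 0 < α) (h1 : α < 1) (hx : 1 < x) :
    mixedKernel α x 1 = (Real.Gamma (1 - α) * Real.Gamma α)⁻¹ *
      (-Real.log (1 - x) + (∫ y in (0 : ℝ)..x, regKernel α y 1) + kernelJump α) := by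
  have hx0 : 0 ≤ x := by linarith
  have one_notMem : (1 : ℝ) ∉ uIcc x 2 := fun h => (lt_min hx one_lt_two).not_ge h.1
  have tail : ∫ y in Ioi x, y ^ (-α) / (1 - y) =
      (∫ y in x..2, y ^ (-α) / (1 - y)) + ∫ y in Ioi (2 : ℝ), y ^ (-α) / (1 - y) := by
    refine (intervalIntegral.integral_interval_add_Ioi' ?_
      (integrableOn_Ioi_rpow_neg_div h0 one_lt_two)).symm
    exact intervalIntegrable_iff.2
      ((integrableOn_Ioi_rpow_neg_div h0 (lt_min hx one_lt_two)).mono_set Ioc_subset_Ioi_self)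
  have middle := integral_rpow_neg_div_one_sub h0.le h1 hx0 zero_le_two one_notMem
  rw [← intervalIntegral.integral_interval_sub_left
    (intervalIntegrable_regKernel_one h0.le h1 le_rfl zero_le_two)
    (intervalIntegrable_regKernel_one h0.le h1 le_rfl hx0)] at middle
  have log_neg_one : Real.log (1 - 2) = 0 := by norm_num
  rw [mixedKernel_one_eq_integral hx.ne' (by simpa [hx.le] using bijOn_mobius_of_one_lt hx),
    setIntegral_congr_fun measurableSet_Ioi fun y hy => by
      rw [abs_of_neg (sub_neg.2 (hx.trans hy)), div_neg],
    integral_neg, tail, middle, kernelJump, log_neg_one]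
  ring

theorem mixedKernel_eq (h0 : 0 < α) (h1 : α < 1) (hτ : 0 < τ) (hu : 0 < u) (hne : u ≠ τ) :
    mixedKernel α τ u = (Real.Gamma (1 - α) * Real.Gamma α)⁻¹ *
      (Real.log u - Real.log (τ - u) + (∫ σ in (0 : ℝ)..τ, regKernel α σ u) +
        (Ioc 0 τ).indicator (fun _ => kernelJump α) u) := by
  have to_one : mixedKernel α τ u = mixedKernel α (τ / u) 1 := by
    rw [← mixedKernel_mul_mul hu (τ / u) 1, mul_div_cancel₀ _ hu.ne', mul_one]
  have log_eq : -Real.log (1 - τ / u) = Real.log u - Real.log (τ - u) := by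
    rw [one_sub_div hu.ne', Real.log_div (sub_ne_zero.2 hne) hu.ne', ← neg_sub τ u,
      Real.log_neg_eq_log]
    ring
  have reg_eq : ∫ y in (0 : ℝ)..τ / u, regKernel α y 1 = ∫ σ in (0 : ℝ)..τ, regKernel α σ u := by
    have homogeneity (y : ℝ) : regKernel α y 1 = u * regKernel α (u * y) u := by
      have := regKernel_mul_mul (α := α) hu.ne' y 1
      rw [mul_one] at this
      rw [this, mul_inv_cancel_left₀ hu.ne']
    simp_rw [homogeneity, intervalIntegral.integral_const_mul,
      intervalIntegral.mul_integral_comp_mul_left (f := fun σ => regKernel α σ u), mul_zero,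
      mul_div_cancel₀ _ hu.ne']
  rw [to_one, ← log_eq, ← reg_eq]
  rcases lt_or_gt_of_ne hne with h | h
  · rw [mixedKernel_one_of_gt h0 h1 ((one_lt_div hu).2 h),
      indicator_of_mem (show u ∈ Ioc 0 τ from ⟨hu, h.le⟩)]
  · rw [mixedKernel_one_of_lt h0.le h1 (div_pos hτ hu) ((div_lt_one hu).2 h),
      indicator_of_notMem fun hmem => h.not_ge hmem.2, add_zero]

end MixedKernel

section Composition

variable {α τ T : ℝ} {e : ℝ → ℝ}

theorem integrableOn_rlKernel_mul_rlKernel {β u : ℝ} (hβ : 0 < β) (γ : ℝ) (h : τ < u) :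
    IntegrableOn (fun s => rlKernel β (τ - s) * rlKernel γ (u - s)) (Ioo 0 τ) := by
  rcases le_or_gt τ 0 with hτ | hτ
  · simp [Ioo_eq_empty hτ.not_gt]
  have singular : IntegrableOn (fun s => rlKernel β (τ - s)) (Icc 0 τ) := by
    rw [integrableOn_Icc_iff_integrableOn_Ioc,
      ← intervalIntegrable_iff_integrableOn_Ioc_of_le hτ.le]
    have := (intervalIntegral.intervalIntegrable_rpow' (a := τ) (b := 0)
      (show -1 < β - 1 by linarith)).div_const (Real.Gamma β)
    simpa [rlKernel] using this.comp_sub_left τ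
  have regular : ContinuousOn (fun s => rlKernel γ (u - s)) (Icc 0 τ) :=
    (ContinuousOn.rpow_const (by fun_prop) fun s hs =>
      Or.inl (sub_pos.2 (hs.2.trans_lt h)).ne').div_const _
  exact (singular.mul_continuousOn regular isCompact_Icc).mono_set Ioo_subset_Icc_self

theorem integrableOn_mixedKernel_integrand (h0 : 0 < α) (h1 : α < 1) {u : ℝ} (hne : u ≠ τ) :
    IntegrableOn (fun s => rlKernel (1 - α) (τ - s) * rlKernel α (u - s)) (Ioo 0 (min τ u)) := by
  rcases lt_or_gt_of_ne hne with h | h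
  · rw [min_eq_right h.le]
    simpa only [mul_comm] using integrableOn_rlKernel_mul_rlKernel h0 (1 - α) h
  · rw [min_eq_left h.le]
    exact integrableOn_rlKernel_mul_rlKernel (sub_pos.2 h1) α h

theorem mixedKernel_eq_integral_indicator (α τ u : ℝ) :
    mixedKernel α τ u = ∫ s in Ioo 0 τ,
      (Iio u).indicator (fun s => rlKernel (1 - α) (τ - s) * rlKernel α (u - s)) s := by
  rw [mixedKernel, setIntegral_indicator measurableSet_Iio, Ioo_inter_Iio]

theorem integrable_indicator_rlKernel_mul (h0 : 0 < α) (h1 : α < 1)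
    (he : AEStronglyMeasurable e (volume.restrict (Ioc 0 T)))
    (hint : IntegrableOn (fun u => mixedKernel α τ u * e u) (Ioc 0 T)) :
    Integrable (Function.uncurry fun u s =>
        (Iio u).indicator (fun s => rlKernel (1 - α) (τ - s) * rlKernel α (u - s)) s * e u)
      ((volume.restrict (Ioc 0 T)).prod (volume.restrict (Ioo 0 τ))) := by
  have measurable_kernel : Measurable fun p : ℝ × ℝ =>
      (Iio p.1).indicator (fun s => rlKernel (1 - α) (τ - s) * rlKernel α (p.1 - s)) p.2 := by
    unfold rlKernel
    exact Measurable.ite (measurableSet_lt measurable_snd measurable_fst) (by fun_prop)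
      measurable_const
  refine (integrable_prod_iff ?_).2 ⟨?_, ?_⟩
  · exact measurable_kernel.aestronglyMeasurable.mul he.comp_fst
  · filter_upwards [ae_restrict_of_ae (Measure.ae_ne volume τ)] with u hne
    have kernel : Integrable
        ((Iio u).indicator fun s => rlKernel (1 - α) (τ - s) * rlKernel α (u - s))
        (volume.restrict (Ioo 0 τ)) := by
      rw [integrable_indicator_iff measurableSet_Iio, IntegrableOn,
        Measure.restrict_restrict measurableSet_Iio, inter_comm, Ioo_inter_Iio]
      exact integrableOn_mixedKernel_integrand h0 h1 hne
    exact kernel.mul_const (e u)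
  · refine hint.norm.congr (ae_of_all _ fun u => ?_)
    simp only [Function.uncurry, norm_mul]
    rw [integral_mul_const, Real.norm_of_nonneg (mixedKernel_nonneg h0.le h1.le τ u),
      mixedKernel_eq_integral_indicator]
    congr 1
    refine setIntegral_congr_fun measurableSet_Ioo fun s hs => (Real.norm_of_nonneg ?_).symm
    exact indicator_apply_nonneg fun hsu => mul_nonneg
      (rlKernel_nonneg (by linarith) (sub_pos.2 hs.2).le)
      (rlKernel_nonneg h0.le (sub_pos.2 hsu).le)

theorem integral_rlKernel_mul_integral_rlKernel (h0 : 0 < α) (h1 : α < 1) (hτ : 0 ≤ τ)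
    (hτT : τ ≤ T) (he : AEStronglyMeasurable e (volume.restrict (Ioc 0 T)))
    (hint : IntegrableOn (fun u => mixedKernel α τ u * e u) (Ioc 0 T)) :
    ∫ s in (0 : ℝ)..τ, rlKernel (1 - α) (τ - s) * ∫ u in s..T, rlKernel α (u - s) * e u =
      ∫ u in Ioc 0 T, mixedKernel α τ u * e u := by
  simp_rw [mixedKernel_eq_integral_indicator, ← integral_mul_const]
  rw [integral_integral_swap (integrable_indicator_rlKernel_mul h0 h1 he hint),
    intervalIntegral.integral_of_le hτ, integral_Ioc_eq_integral_Ioo]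
  refine setIntegral_congr_fun measurableSet_Ioo fun s hs => ?_
  have tail : Ioc 0 T ∩ Ioi s = Ioc s T := by rw [Ioc_inter_Ioi, max_eq_right hs.1.le]
  rw [intervalIntegral.integral_of_le (hs.2.le.trans hτT), ← integral_const_mul, ← tail,
    ← setIntegral_indicator measurableSet_Ioi]
  refine integral_congr_ae (ae_of_all _ fun u => ?_)
  by_cases hsu : s < u <;> simp [indicator, hsu, mul_assoc]

end Composition

/-! ### The derivative and its `L²` bound -/

section Density

variable {α τ T : ℝ} {f : ℝ → ℝ}

theorem integral_integral_regKernel_mul (h0 : 0 ≤ α) (h2 : α < 1 / 2)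
    (hf : MemLp f 2 (volume.restrict (Ioi 0))) (hτ : 0 ≤ τ) :
    IntegrableOn (fun u => (∫ σ in (0 : ℝ)..τ, regKernel α σ u) * f u) (Ioi 0) ∧
      ∫ u in Ioi 0, (∫ σ in (0 : ℝ)..τ, regKernel α σ u) * f u =
        ∫ σ in (0 : ℝ)..τ, ∫ u in Ioi 0, regKernel α σ u * f u := by
  have integrable := integrable_regKernel_mul h0 h2 hf τ
  simp_rw [intervalIntegral.integral_of_le hτ, ← integral_mul_const]
  exact ⟨integrable.integral_prod_right, (integral_integral_swap integrable).symm⟩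

theorem mixedKernel_mul_ae_eq (h0 : 0 < α) (h1 : α < 1) (hτ : 0 < τ) (f : ℝ → ℝ) :
    (fun u => mixedKernel α τ u * f u) =ᵐ[volume.restrict (Ioi 0)] fun u =>
      (Real.Gamma (1 - α) * Real.Gamma α)⁻¹ *
        (Real.log (0 - u) * f u - Real.log (τ - u) * f u +
          (∫ σ in (0 : ℝ)..τ, regKernel α σ u) * f u + kernelJump α * (Ioc 0 τ).indicator f u) := by
  filter_upwards [ae_restrict_of_ae (Measure.ae_ne volume τ), ae_restrict_mem measurableSet_Ioi]
    with u hne hu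
  rw [mixedKernel_eq h0 h1 hτ hu hne, zero_sub, Real.log_neg_eq_log]
  by_cases hmem : u ∈ Ioc 0 τ
  · rw [indicator_of_mem hmem, indicator_of_mem hmem]
    ring
  · rw [indicator_of_notMem hmem, indicator_of_notMem hmem]
    ring

theorem integral_mixedKernel_mul (h0 : 0 < α) (h2 : α < 1 / 2) (hf2 : MemLp f 2)
    (hf_supp : Function.support f ⊆ Ioc 0 T) (hτ : 0 < τ) :
    IntegrableOn (fun u => mixedKernel α τ u * f u) (Ioi 0) ∧
      ∫ u in Ioi 0, mixedKernel α τ u * f u = (Real.Gamma (1 - α) * Real.Gamma α)⁻¹ *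
        (logPotential f 0 - logPotential f τ +
          (∫ t in (0 : ℝ)..τ, ∫ u in Ioi 0, regKernel α t u * f u) +
          kernelJump α * ∫ t in (0 : ℝ)..τ, f t) := by
  have log_integrable (t : ℝ) : IntegrableOn (fun u => Real.log (t - u) * f u) (Ioi 0) :=
    (integrable_log_sub_mul hf2 hf_supp t).integrableOn
  have log_integral (t : ℝ) : ∫ u in Ioi 0, Real.log (t - u) * f u = logPotential f t :=
    setIntegral_eq_integral_of_forall_compl_eq_zero fun u hu => mul_eq_zero_of_right _
      (Function.notMem_support.1 fun hmem => hu (hf_supp hmem).1)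
  obtain ⟨reg_integrable, reg_integral⟩ :=
    integral_integral_regKernel_mul h0.le h2 (hf2.restrict (Ioi 0)) hτ.le
  have jump_integrable : IntegrableOn ((Ioc 0 τ).indicator f) (Ioi 0) :=
    ((integrable_indicator_iff measurableSet_Ioc).2
      ((hf2.restrict (Ioc 0 τ)).integrable one_le_two)).integrableOn
  have jump_integral : ∫ u in Ioi 0, (Ioc 0 τ).indicator f u = ∫ t in (0 : ℝ)..τ, f t := by
    rw [setIntegral_indicator measurableSet_Ioc, inter_eq_right.2 Ioc_subset_Ioi_self,
      intervalIntegral.integral_of_le hτ.le]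
  have log_diff : IntegrableOn (fun u => Real.log (0 - u) * f u - Real.log (τ - u) * f u)
      (Ioi 0) := (log_integrable 0).sub (log_integrable τ)
  have log_reg : IntegrableOn (fun u => Real.log (0 - u) * f u - Real.log (τ - u) * f u +
      (∫ σ in (0 : ℝ)..τ, regKernel α σ u) * f u) (Ioi 0) := log_diff.add reg_integrable
  have kernel_eq := mixedKernel_mul_ae_eq h0 (by linarith) hτ f
  constructor
  · exact ((log_reg.add (jump_integrable.const_mul _)).const_mul _).congr kernel_eq.symm
  · rw [integral_congr_ae kernel_eq, integral_const_mul,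
      integral_add log_reg (jump_integrable.const_mul _),
      integral_add log_diff reg_integrable, integral_sub (log_integrable 0) (log_integrable τ),
      log_integral, log_integral, reg_integral, integral_const_mul, jump_integral]

theorem intervalIntegrable_of_memLp_Ioi {p : ℝ≥0∞} (hp : 1 ≤ p)
    (hf : MemLp f p (volume.restrict (Ioi 0))) (hτ : 0 ≤ τ) : IntervalIntegrable f volume 0 τ :=
  (intervalIntegrable_iff_integrableOn_Ioc_of_le hτ).2
    ((hf.mono_measure (Measure.restrict_mono_set _ Ioc_subset_Ioi_self)).integrable hp)

/-- The `L²` operator norm bound for `e ↦ D_{0+}^α I_{T-}^α e` obtained by adding up the bounds for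
the Hilbert transform, the regular kernel and the jump of the kernel on the diagonal. -/
noncomputable def stabilityBound (α : ℝ) : ℝ≥0∞ :=
  ‖(Real.Gamma (1 - α) * Real.Gamma α)⁻¹‖ₑ *
    (ENNReal.ofReal Real.pi + regKernelBound α + ‖kernelJump α‖ₑ)

theorem stabilityBound_pos (h0 : 0 < α) (h1 : α < 1) : 0 < stabilityBound α :=
  ENNReal.mul_pos
    (enorm_ne_zero.2 (inv_pos.2 (mul_pos (Real.Gamma_pos_of_pos (sub_pos.2 h1))
      (Real.Gamma_pos_of_pos h0))).ne')
    (by positivity)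

theorem stabilityBound_lt_top (h0 : 0 ≤ α) (h2 : α < 1 / 2) : stabilityBound α < ∞ :=
  ENNReal.mul_lt_top enorm_lt_top (ENNReal.add_lt_top.2 ⟨ENNReal.add_lt_top.2
    ⟨ENNReal.ofReal_lt_top, regKernelBound_lt_top h0 h2⟩, enorm_lt_top⟩)

theorem exists_integral_mixedKernel_mul_eq (h0 : 0 < α) (h2 : α < 1 / 2) (hf2 : MemLp f 2)
    (hf_supp : Function.support f ⊆ Ioc 0 T) :
    ∃ D : ℝ → ℝ, MemLp D 2 (volume.restrict (Ioi 0)) ∧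
      eLpNorm D 2 (volume.restrict (Ioi 0)) ≤ stabilityBound α * eLpNorm f 2 ∧
      ∀ τ, 0 < τ → IntegrableOn (fun u => mixedKernel α τ u * f u) (Ioi 0) ∧
        ∫ u in Ioi 0, mixedKernel α τ u * f u = ∫ t in (0 : ℝ)..τ, D t := by
  have hf : Integrable f := (integrableOn_iff_integrable_of_support_subset hf_supp).1
    ((hf2.restrict (Ioc 0 T)).integrable one_le_two)
  obtain ⟨g, g_memLp, g_le, g_primitive⟩ :=
    exists_logPotential_sub_eq_integral hf hf2 (integrable_log_sub_mul hf2 hf_supp)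
  set R : ℝ → ℝ := fun t => ∫ u in Ioi 0, regKernel α t u * f u
  have R_memLp : MemLp R 2 (volume.restrict (Ioi 0)) :=
    memLp_integral_regKernel_mul h0.le h2 (hf2.restrict _)
  have neg_g_memLp : MemLp (-g) 2 (volume.restrict (Ioi 0)) := (g_memLp.restrict _).neg
  have jump_memLp : MemLp (kernelJump α • f) 2 (volume.restrict (Ioi 0)) :=
    (hf2.restrict _).const_smul _
  refine ⟨(Real.Gamma (1 - α) * Real.Gamma α)⁻¹ • (-g + R + kernelJump α • f),
    ((neg_g_memLp.add R_memLp).add jump_memLp).const_smul _, ?_, fun τ hτ => ?_⟩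
  · rw [eLpNorm_const_smul, stabilityBound, mul_assoc, add_mul, add_mul]
    gcongr
    refine (eLpNorm_add_le (neg_g_memLp.add R_memLp).1 jump_memLp.1 one_le_two).trans
      (add_le_add ((eLpNorm_add_le neg_g_memLp.1 R_memLp.1 one_le_two).trans (add_le_add ?_ ?_)) ?_)
    · rw [eLpNorm_neg]
      exact (eLpNorm_restrict_le g 2 volume _).trans g_le
    · exact (eLpNorm_integral_regKernel_mul_le hf2.1.restrict).trans
        (mul_le_mul_right (eLpNorm_restrict_le f 2 volume _) _)
    · rw [eLpNorm_const_smul]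
      gcongr
      exact Measure.restrict_le_self
  · obtain ⟨integrable, integral_eq⟩ := integral_mixedKernel_mul h0 h2 hf2 hf_supp hτ
    have R_interval := intervalIntegrable_of_memLp_Ioi one_le_two R_memLp hτ.le
    have jump_interval := intervalIntegrable_of_memLp_Ioi one_le_two jump_memLp hτ.le
    have g_interval := intervalIntegrable_of_memLp_Ioi one_le_two neg_g_memLp hτ.le
    have integral_sum : ∫ t in (0 : ℝ)..τ, (-g + R + kernelJump α • f) t =
        logPotential f 0 - logPotential f τ + (∫ t in (0 : ℝ)..τ, R t) +
          kernelJump α * ∫ t in (0 : ℝ)..τ, f t := by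
      rw [← neg_sub (logPotential f τ), g_primitive 0 τ hτ.le, ← intervalIntegral.integral_neg,
        ← intervalIntegral.integral_const_mul]
      exact (intervalIntegral.integral_add (g_interval.add R_interval) jump_interval).trans
        (congrArg (· + _) (intervalIntegral.integral_add g_interval R_interval))
    refine ⟨integrable, ?_⟩
    simp only [Pi.smul_apply _ (-g + R + _), smul_eq_mul, intervalIntegral.integral_const_mul,
      integral_sum, integral_eq, R]

end Density

theorem exists_integral_rlKernel_mul_eq {α T : ℝ} (h0 : 0 < α) (h2 : α < 1 / 2) {e : ℝ → ℝ}
    (he : MemLp e 2 (volume.restrict (Ioc 0 T))) :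
    ∃ D : ℝ → ℝ, MemLp D 2 (volume.restrict (Ioi 0)) ∧
      eLpNorm D 2 (volume.restrict (Ioi 0)) ≤
        stabilityBound α * eLpNorm e 2 (volume.restrict (Ioc 0 T)) ∧
      ∀ τ ∈ Ioc 0 T, ∫ s in (0 : ℝ)..τ, rlKernel (1 - α) (τ - s) *
        (∫ u in s..T, rlKernel α (u - s) * e u) = ∫ t in (0 : ℝ)..τ, D t := by
  have indicator_memLp := (memLp_indicator_iff_restrict measurableSet_Ioc).2 he
  obtain ⟨D, D_memLp, D_le, D_primitive⟩ :=
    exists_integral_mixedKernel_mul_eq h0 h2 indicator_memLp support_indicator_subset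
  rw [eLpNorm_indicator_eq_eLpNorm_restrict measurableSet_Ioc] at D_le
  refine ⟨D, D_memLp, D_le, fun τ hτ => ?_⟩
  obtain ⟨integrable, integral_eq⟩ := D_primitive τ hτ.1
  simp_rw [← indicator_mul_right (Ioc 0 T) (mixedKernel α τ) e] at integrable integral_eq
  rw [setIntegral_indicator measurableSet_Ioc, inter_eq_right.2 Ioc_subset_Ioi_self] at integral_eq
  rw [← integral_eq]
  refine integral_rlKernel_mul_integral_rlKernel h0 (by linarith) hτ.1.le hτ.2 he.1 ?_
  exact IntegrableOn.congr_fun (integrable.mono_set Ioc_subset_Ioi_self)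
    (fun u hu => indicator_of_mem hu _) measurableSet_Ioc

theorem memLp_restrict_Ioc_of_continuousOn {a b : ℝ} {e : ℝ → ℝ} (he : ContinuousOn e (Icc a b))
    (p : ℝ≥0∞) : MemLp e p (volume.restrict (Ioc a b)) := by
  obtain ⟨C, hC⟩ := isCompact_Icc.exists_bound_of_continuousOn he
  exact .of_bound ((he.mono Ioc_subset_Icc_self).aestronglyMeasurable measurableSet_Ioc) C
    ((ae_restrict_mem measurableSet_Ioc).mono fun t ht => hC t (Ioc_subset_Icc_self ht))

theorem adjoint_problem_stability_general (α : ℝ) (hα0 : 0 < α) (hα2 : α < 1 / 2) :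
    ∃ C : ℝ, 0 < C ∧
      ∀ T : ℝ, 0 < T → ∀ e : ℝ → ℝ, MemLp e 2 (volume.restrict (Ioc 0 T)) →
        ∃ D : ℝ → ℝ, MemLp D 2 (volume.restrict (Ioc 0 T)) ∧
          (∀ᵐ t ∂volume, t ∈ Ioo (0 : ℝ) T →
            HasDerivAt
              (fun τ => ∫ s in (0:ℝ)..τ,
                rlKernel (1 - α) (τ - s) * (∫ u in s..T, rlKernel α (u - s) * e u))
              (D t) t) ∧
          (∫ t in (0:ℝ)..T, (D t) ^ 2) ≤ C * ∫ t in (0:ℝ)..T, (e t) ^ 2 := by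
  have bound_pos := stabilityBound_pos hα0 (by linarith)
  have bound_lt_top := stabilityBound_lt_top hα0.le hα2
  refine ⟨(stabilityBound α ^ 2).toReal,
    ENNReal.toReal_pos (by positivity) (ENNReal.pow_lt_top bound_lt_top).ne, fun T hT e he => ?_⟩
  obtain ⟨D, D_memLp, D_le, D_primitive⟩ := exists_integral_rlKernel_mul_eq hα0 hα2 he
  have restrict_le : volume.restrict (Ioc 0 T) ≤ volume.restrict (Ioi 0) :=
    Measure.restrict_mono_set _ Ioc_subset_Ioi_self
  refine ⟨D, D_memLp.mono_measure restrict_le, ?_, ?_⟩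
  · filter_upwards [(intervalIntegrable_of_memLp_Ioi one_le_two D_memLp
      hT.le).ae_hasDerivAt_integral] with t ht ht_mem
    have t_mem : t ∈ uIcc 0 T := Ioo_subset_Icc_self.trans Icc_subset_uIcc ht_mem
    refine (ht t_mem 0 left_mem_uIcc).congr_of_eventuallyEq ?_
    filter_upwards [Ioo_mem_nhds ht_mem.1 ht_mem.2] with τ hτ
    exact D_primitive τ (Ioo_subset_Ioc_self hτ)
  · rw [intervalIntegral.integral_of_le hT.le, intervalIntegral.integral_of_le hT.le,
      ← toReal_sq_eLpNorm_two (D_memLp.mono_measure restrict_le).1, ← toReal_sq_eLpNorm_two he.1,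
      ← ENNReal.toReal_mul, ← mul_pow]
    refine ENNReal.toReal_mono (ENNReal.pow_ne_top (ENNReal.mul_ne_top bound_lt_top.ne he.2.ne)) ?_
    gcongr
    exact (eLpNorm_mono_measure _ restrict_le).trans D_le

/-- Stability of the adjoint problem: for `0 < α < 1/2` there is `C > 0` depending only
on `α` such that for every `T > 0` and continuous `e : [0,T] → ℝ`, the right fractional
integral `w(t) = ∫_t^T ω_α(s-t) e(s) ds` satisfies
`∫_0^T ((D_{0+}^α w)(t))² dt ≤ C ∫_0^T e(t)² dt`, the left Riemann–Liouville derivative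
`D_{0+}^α w` existing at almost every `t ∈ (0,T)`. -/
theorem adjoint_problem_stability (α : ℝ) (hα0 : 0 < α) (hα2 : α < 1 / 2) :
    ∃ C : ℝ, 0 < C ∧
      ∀ T : ℝ, 0 < T → ∀ e : ℝ → ℝ, ContinuousOn e (Set.Icc 0 T) →
        ∃ D : ℝ → ℝ,
          (∀ᵐ t ∂MeasureTheory.volume, t ∈ Set.Ioo (0 : ℝ) T →
            HasDerivAt
              (fun τ => ∫ s in (0:ℝ)..τ,
                rlKernel (1 - α) (τ - s) * (∫ u in s..T, rlKernel α (u - s) * e u))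
              (D t) t) ∧
          (∫ t in (0:ℝ)..T, (D t) ^ 2) ≤ C * ∫ t in (0:ℝ)..T, (e t) ^ 2 := by
  obtain ⟨C, hC, stability⟩ := adjoint_problem_stability_general α hα0 hα2
  exact ⟨C, hC, fun T hT e he => (stability T hT e (memLp_restrict_Ioc_of_continuousOn he 2)).imp
    fun _ => And.right⟩
end
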